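/- Under the non-stationary zero-returns model with mixing, and with the kernel estimators defined from a kernel and bandwidth satisfying the kernel and bandwidth assumption, for each h = 1,…,m the statistic γ̂_{ar²}(h) = (n−h)^{−1} Σ_{t=1+h}^n r_t² · p̂_{t,t−h}/p̂_t converges in probability, as n → ∞, to ∫₀¹ v(s)² g_h(s) ds. -/

import Mathlib

open MeasureTheory ProbabilityTheory Filter Set

namespace ZeroReturnsNS

variable {Ω : Type*} [MeasurableSpace Ω]

/-- A function is piecewise Lipschitz on `(0,1]` if `(0,1]` is a finite disjoint union of
intervals on each of which the function is Lipschitz. -/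
def PiecewiseLipschitzOn01 (f : ℝ → ℝ) : Prop :=
  ∃ (p : ℕ) (I : Fin p → Set ℝ) (C : Fin p → NNReal),
    (∀ l, (I l).OrdConnected) ∧
    Pairwise (Function.onFun Disjoint I) ∧
    (⋃ l, I l) = Set.Ioc (0 : ℝ) 1 ∧
    ∀ l, LipschitzOnWith (C l) f (I l)

/-- The triangular array of returns `r_t = v(t/n) ε_t`. -/
noncomputable def rproc (v : ℝ → ℝ) (ε : ℕ → ℕ → Ω → ℝ) (n t : ℕ) (ω : Ω) : ℝ :=
  v ((t : ℝ) / n) * ε n t ω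

/-- The zero-return indicator `a_t = 1_{r_t ≠ 0}`. -/
noncomputable def aproc (v : ℝ → ℝ) (ε : ℕ → ℕ → Ω → ℝ) (n t : ℕ) (ω : Ω) : ℝ :=
  if rproc v ε n t ω ≠ 0 then 1 else 0

/-- The σ-field `σ(ε_u : u ≤ t)` of the past of the `n`-th row of the array. -/
noncomputable def pastField (ε : ℕ → ℕ → Ω → ℝ) (n t : ℕ) : MeasurableSpace Ω :=
  ⨆ u ∈ {u : ℕ | u ≤ t}, MeasurableSpace.comap (ε n u) inferInstance

/-- The σ-field `σ(ε_u : u ≥ t)` of the future of the `n`-th row of the array. -/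
noncomputable def futureField (ε : ℕ → ℕ → Ω → ℝ) (n t : ℕ) : MeasurableSpace Ω :=
  ⨆ u ∈ {u : ℕ | t ≤ u}, MeasurableSpace.comap (ε n u) inferInstance

/-- The strong (α-)mixing coefficients of `(ε_t)`:
`α_ε(h) = sup { |P(A∩B) - P(A)P(B)| : A ∈ σ(ε_u : u ≤ t), B ∈ σ(ε_u : u ≥ t+h) }`. -/
noncomputable def alphaMix (μ : Measure Ω) (ε : ℕ → ℕ → Ω → ℝ) (h : ℕ) : ℝ :=
  ⨆ n : ℕ, ⨆ t : ℕ, sSup {x : ℝ | ∃ A B : Set Ω,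
    MeasurableSet[pastField ε n t] A ∧ MeasurableSet[futureField ε n (t + h)] B ∧
    x = |(μ (A ∩ B)).toReal - (μ A).toReal * (μ B).toReal|}

/-- `K_{ti} = K((t-i)/(nb))` for `t ≠ i`, and `K_{tt} = 0`. -/
noncomputable def Kw (K : ℝ → ℝ) (b : ℕ → ℝ) (n t i : ℕ) : ℝ :=
  if t = i then 0 else K (((t : ℝ) - (i : ℝ)) / ((n : ℝ) * b n))

/-- The kernel weights `w_{tj}(b) = K_{tj} / Σ_{i=1}^n K_{ti}`. -/
noncomputable def wgt (K : ℝ → ℝ) (b : ℕ → ℝ) (n t j : ℕ) : ℝ :=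
  Kw K b n t j / ∑ i ∈ Finset.Icc 1 n, Kw K b n t i

/-- The kernel estimator `p̂_t = Σ_{j=1}^n w_{tj}(b) a_j` of `P(a_t = 1)`. -/
noncomputable def phat (v : ℝ → ℝ) (ε : ℕ → ℕ → Ω → ℝ) (K : ℝ → ℝ) (b : ℕ → ℝ)
    (n t : ℕ) (ω : Ω) : ℝ :=
  ∑ j ∈ Finset.Icc 1 n, wgt K b n t j * aproc v ε n j ω

/-- The kernel estimator `p̂_{t,t-h} = Σ_{j=1+h}^n w_{tj}(b) a_j a_{j-h}` of
`P(a_t a_{t-h} = 1)`. -/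
noncomputable def phat2 (v : ℝ → ℝ) (ε : ℕ → ℕ → Ω → ℝ) (K : ℝ → ℝ) (b : ℕ → ℝ)
    (n h t : ℕ) (ω : Ω) : ℝ :=
  ∑ j ∈ Finset.Icc (h + 1) n, wgt K b n t j * (aproc v ε n j ω * aproc v ε n (j - h) ω)

/-- `γ̂_{ar²}(h) = (n-h)⁻¹ Σ_{t=1+h}^n r_t² p̂_{t,t-h}/p̂_t`
(terms with `p̂_t = 0` are set to zero). -/
noncomputable def gammaAr2 (v : ℝ → ℝ) (ε : ℕ → ℕ → Ω → ℝ) (K : ℝ → ℝ) (b : ℕ → ℝ)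
    (n h : ℕ) (ω : Ω) : ℝ :=
  ((n : ℝ) - (h : ℝ))⁻¹ * ∑ t ∈ Finset.Icc (h + 1) n, (rproc v ε n t ω) ^ 2 *
    (if phat v ε K b n t ω = 0 then 0 else phat2 v ε K b n h t ω / phat v ε K b n t ω)

/-- `γ̂_0(h) = n⁻¹ Σ_{t=1+h}^n r_t r_{t-h}`. -/
noncomputable def gammaHat0 (v : ℝ → ℝ) (ε : ℕ → ℕ → Ω → ℝ) (n h : ℕ) (ω : Ω) : ℝ :=
  (n : ℝ)⁻¹ * ∑ t ∈ Finset.Icc (h + 1) n, rproc v ε n t ω * rproc v ε n (t - h) ω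

/-- `γ̂_a(h) = n⁻¹ Σ_{t=1+h}^n a_t a_{t-h}`. -/
noncomputable def gammaHatA (v : ℝ → ℝ) (ε : ℕ → ℕ → Ω → ℝ) (n h : ℕ) (ω : Ω) : ℝ :=
  (n : ℝ)⁻¹ * ∑ t ∈ Finset.Icc (h + 1) n, aproc v ε n t ω * aproc v ε n (t - h) ω

/-- `ρ̂_0(h) = γ̂_0(h)/γ̂_0(0)`. -/
noncomputable def rhoHat0 (v : ℝ → ℝ) (ε : ℕ → ℕ → Ω → ℝ) (n h : ℕ) (ω : Ω) : ℝ :=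
  gammaHat0 v ε n h ω / gammaHat0 v ε n 0 ω

/-- `ρ̂_vpr(h) = (γ̂_0(0)/γ̂_{ar²}(h)) ρ̂_0(h)`. -/
noncomputable def rhoHatVpr (v : ℝ → ℝ) (ε : ℕ → ℕ → Ω → ℝ) (K : ℝ → ℝ) (b : ℕ → ℝ)
    (n h : ℕ) (ω : Ω) : ℝ :=
  (gammaHat0 v ε n 0 ω / gammaAr2 v ε K b n h ω) * rhoHat0 v ε n h ω

/-- `ρ̂_pr(h) = ρ̂_0(h) γ̂_a(0)/γ̂_a(h)`. -/
noncomputable def rhoHatPr (v : ℝ → ℝ) (ε : ℕ → ℕ → Ω → ℝ) (n h : ℕ) (ω : Ω) : ℝ :=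
  rhoHat0 v ε n h ω * (gammaHatA v ε n 0 ω / gammaHatA v ε n h ω)

end ZeroReturnsNS

namespace ZeroReturnsNS

/-- An average over `{1,…,n}` as the integral of a step function over `(0,1]`. -/
lemma integral_comp_ceil_eq_average (F : ℕ → ℝ) {n : ℕ} (hn : 0 < n) :
    ∫ s in Ioc (0 : ℝ) 1, F ⌈(n : ℝ) * s⌉₊ = (n : ℝ)⁻¹ * ∑ t ∈ Finset.Icc 1 n, F t := by
  have hn' : (0 : ℝ) < n := by exact_mod_cast hn
  have hle : ∀ k : ℕ, (k : ℝ) / n ≤ ((k + 1 : ℕ) : ℝ) / n := fun k => by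
    push_cast; gcongr; linarith
  have hstep : ∀ k : ℕ, EqOn (fun s : ℝ => F ⌈(n : ℝ) * s⌉₊) (fun _ => F (k + 1))
      (Ioc ((k : ℝ) / n) (((k + 1 : ℕ) : ℝ) / n)) := by
    intro k s hs
    have h1 : (k : ℝ) < n * s := by
      have := (div_lt_iff₀ hn').1 hs.1
      linarith
    have h2 : n * s ≤ ((k + 1 : ℕ) : ℝ) := by
      have := (le_div_iff₀ hn').1 hs.2
      linarith
    have : ⌈(n : ℝ) * s⌉₊ = k + 1 := by
      rw [Nat.ceil_eq_iff (by omega)]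
      exact ⟨by simpa using h1, h2⟩
    simp only [this]
  have hinteg : ∀ k < n, IntervalIntegrable (fun s : ℝ => F ⌈(n : ℝ) * s⌉₊) volume
      ((k : ℝ) / n) (((k + 1 : ℕ) : ℝ) / n) := by
    intro k _
    rw [intervalIntegrable_iff_integrableOn_Ioc_of_le (hle k)]
    exact (integrableOn_congr_fun (hstep k) measurableSet_Ioc).2 (by simp)
  have hsum := intervalIntegral.sum_integral_adjacent_intervals
    (f := fun s : ℝ => F ⌈(n : ℝ) * s⌉₊) (μ := volume) (a := fun k : ℕ => (k : ℝ) / n)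
    (n := n) hinteg
  have h0 : ((0 : ℕ) : ℝ) / n = 0 := by simp
  have h1 : (n : ℝ) / n = 1 := div_self hn'.ne'
  rw [h0, h1, intervalIntegral.integral_of_le zero_le_one] at hsum
  have hk : ∀ k ∈ Finset.range n, ∫ s in ((k : ℝ) / n)..(((k + 1 : ℕ) : ℝ) / n),
      F ⌈(n : ℝ) * s⌉₊ = (n : ℝ)⁻¹ * F (k + 1) := by
    intro k _
    rw [intervalIntegral.integral_of_le (hle k),
      setIntegral_congr_fun measurableSet_Ioc (hstep k), ← intervalIntegral.integral_of_le (hle k),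
      intervalIntegral.integral_const, smul_eq_mul]
    congr 1
    push_cast
    field_simp
    ring
  rw [← hsum, Finset.sum_congr rfl hk, ← Finset.mul_sum, Finset.range_eq_Ico,
    Finset.sum_Ico_add' F 0 n 1]
  rfl

lemma tendsto_average_of_ae_tendsto {F : ℕ → ℕ → ℝ} {f : ℝ → ℝ} {C : ℝ}
    (hC : ∀ n t, 1 ≤ t → t ≤ n → |F n t| ≤ C)
    (hF : ∀ᵐ s ∂volume.restrict (Ioc (0 : ℝ) 1),
      Tendsto (fun n : ℕ => F n ⌈(n : ℝ) * s⌉₊) atTop (nhds (f s))) :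
    Tendsto (fun n : ℕ => (n : ℝ)⁻¹ * ∑ t ∈ Finset.Icc 1 n, F n t) atTop
      (nhds (∫ s in Ioc (0 : ℝ) 1, f s)) := by
  have key : Tendsto (fun n : ℕ => ∫ s in Ioc (0 : ℝ) 1, F n ⌈(n : ℝ) * s⌉₊) atTop
      (nhds (∫ s in Ioc (0 : ℝ) 1, f s)) := by
    refine tendsto_integral_filter_of_dominated_convergence (fun _ => C) ?_ ?_
      (by simp) hF
    · refine Eventually.of_forall fun n => Measurable.aestronglyMeasurable ?_
      exact (measurable_from_top (f := F n)).comp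
        (Nat.measurable_ceil.comp (measurable_const.mul measurable_id))
    · filter_upwards [eventually_gt_atTop 0] with n hn
      refine (ae_restrict_iff' measurableSet_Ioc).2 (Eventually.of_forall fun s hs => ?_)
      have hn' : (0 : ℝ) < n := by exact_mod_cast hn
      refine hC n _ (Nat.ceil_pos.2 (mul_pos hn' hs.1)) (Nat.ceil_le.2 ?_)
      nlinarith [hs.2]
  refine key.congr' ?_
  filter_upwards [eventually_gt_atTop 0] with n hn using integral_comp_ceil_eq_average _ hn

lemma tendsto_ceil_mul_div {s : ℝ} (hs : 0 < s) :
    Tendsto (fun n : ℕ => ((⌈(n : ℝ) * s⌉₊ : ℕ) : ℝ) / n) atTop (nhds s) := by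
  have := (tendsto_nat_ceil_mul_div_atTop hs.le).comp tendsto_natCast_atTop_atTop
  simpa [Function.comp_def, mul_comm] using this

lemma PiecewiseLipschitzOn01.ae_continuousAt {f : ℝ → ℝ} (hf : PiecewiseLipschitzOn01 f) :
    ∀ᵐ s ∂volume.restrict (Ioc (0 : ℝ) 1), ContinuousAt f s := by
  obtain ⟨p, I, C, hI, -, hU, hL⟩ := hf
  have hfr : ∀ᵐ s : ℝ, ∀ l, s ∉ frontier (I l) := by
    rw [ae_all_iff]
    intro l
    exact measure_eq_zero_iff_ae_notMem.1
      (Convex.addHaar_frontier volume (Set.OrdConnected.convex (hI l)))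
  refine (ae_restrict_iff' measurableSet_Ioc).2 ?_
  filter_upwards [hfr] with s hs hs01
  rw [← hU, mem_iUnion] at hs01
  obtain ⟨l, hl⟩ := hs01
  have hinteg : s ∈ interior (I l) := by
    by_contra hcon
    exact hs l ⟨subset_closure hl, hcon⟩
  exact (hL l).continuousOn.continuousAt (mem_interior_iff_mem_nhds.1 hinteg)

lemma ae_restrict_Ioc_mem_Ioo :
    ∀ᵐ s ∂volume.restrict (Ioc (0 : ℝ) 1), s ∈ Ioo (0 : ℝ) 1 := by
  rw [← restrict_Ioo_eq_restrict_Ioc]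
  exact ae_restrict_mem measurableSet_Ioo

lemma sum_comp_natDist_le {β : ℕ → ℝ} (hβ0 : ∀ k, 0 ≤ β k) (hβ : Summable β)
    (J : Finset ℕ) (i : ℕ) : ∑ j ∈ J, β (Nat.dist i j) ≤ 2 * ∑' k, β k := by
  rw [← Finset.sum_filter_add_sum_filter_not J (fun j => j ≤ i), two_mul]
  have aux : ∀ T : Finset ℕ, Set.InjOn (Nat.dist i) T →
      ∑ j ∈ T, β (Nat.dist i j) ≤ ∑' k, β k := by
    intro T hT
    rw [← Finset.sum_image (f := β) hT]
    exact hβ.sum_le_tsum _ fun k _ => hβ0 k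
  refine add_le_add (aux _ ?_) (aux _ ?_)
  · intro x hx y hy hxy
    simp only [Finset.coe_filter, mem_ofPred_eq] at hx hy
    simp only [Nat.dist] at hxy
    omega
  · intro x hx y hy hxy
    simp only [Finset.coe_filter, mem_ofPred_eq] at hx hy
    simp only [Nat.dist] at hxy
    omega

section Covariance

variable {Ω : Type*} [MeasurableSpace Ω] (μ : Measure Ω) [IsProbabilityMeasure μ]

lemma integral_mul_centered_indicator {A B : Set Ω} (hA : MeasurableSet A)
    (hB : MeasurableSet B) :
    ∫ ω, (A.indicator (fun _ => (1 : ℝ)) ω - μ.real A) *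
        (B.indicator (fun _ => (1 : ℝ)) ω - μ.real B) ∂μ
      = μ.real (A ∩ B) - μ.real A * μ.real B := by
  have hAi : Integrable (A.indicator (fun _ => (1 : ℝ))) μ := (integrable_const 1).indicator hA
  have hBi : Integrable (B.indicator (fun _ => (1 : ℝ))) μ := (integrable_const 1).indicator hB
  have hABi : Integrable ((A ∩ B).indicator (fun _ => (1 : ℝ))) μ :=
    (integrable_const 1).indicator (hA.inter hB)
  have hexp : ∀ ω, (A.indicator (fun _ => (1 : ℝ)) ω - μ.real A) *
        (B.indicator (fun _ => (1 : ℝ)) ω - μ.real B)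
      = (A ∩ B).indicator (fun _ => (1 : ℝ)) ω - μ.real B * A.indicator (fun _ => (1 : ℝ)) ω
        - μ.real A * B.indicator (fun _ => (1 : ℝ)) ω + μ.real A * μ.real B := by
    intro ω
    by_cases h1 : ω ∈ A <;> by_cases h2 : ω ∈ B <;> simp [h1, h2] <;> ring
  simp_rw [hexp]
  rw [integral_add, integral_sub, integral_sub, integral_const_mul, integral_const_mul,
    integral_indicator_const _ hA, integral_indicator_const _ hB,
    integral_indicator_const _ (hA.inter hB)]
  · simp; ring
  all_goals fun_prop

lemma sq_integral_abs_le {X : Ω → ℝ} (hX : MemLp X 2 μ) :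
    (∫ ω, |X ω| ∂μ) ^ 2 ≤ ∫ ω, X ω ^ 2 ∂μ := by
  have h := variance_nonneg |X| μ
  rw [variance_eq_sub hX.abs] at h
  simpa using h

/-- Weighted sums of centred indicators of weakly dependent events are small in `L¹`. -/
lemma integral_abs_sum_centered_indicator_le {J : Finset ℕ} {w : ℕ → ℝ} {A : ℕ → Set Ω}
    (hA : ∀ j ∈ J, MeasurableSet (A j)) {β : ℕ → ℝ} (hβ0 : ∀ k, 0 ≤ β k) (hβ : Summable β)
    (hcov : ∀ i ∈ J, ∀ j ∈ J, i ≤ j →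
      |μ.real (A i ∩ A j) - μ.real (A i) * μ.real (A j)| ≤ β (j - i))
    {V W : ℝ} (hW0 : 0 ≤ W) (hW : ∀ j ∈ J, |w j| ≤ W) (hV : ∑ j ∈ J, |w j| ≤ V) :
    ∫ ω, |∑ j ∈ J, w j * ((A j).indicator (fun _ => (1 : ℝ)) ω - μ.real (A j))| ∂μ
      ≤ √(2 * V * W * ∑' k, β k) := by
  have hXL : ∀ j ∈ J, MemLp (fun ω => (A j).indicator (fun _ => (1 : ℝ)) ω - μ.real (A j)) 2 μ :=
    fun j hj => (memLp_indicator_const 2 (hA j hj) 1 (Or.inr (measure_ne_top μ _))).sub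
      (memLp_const _)
  have hcov' : ∀ i ∈ J, ∀ j ∈ J,
      |μ.real (A i ∩ A j) - μ.real (A i) * μ.real (A j)| ≤ β (Nat.dist i j) := by
    intro i hi j hj
    rcases le_total i j with hij | hij
    · rw [Nat.dist_eq_sub_of_le hij]; exact hcov i hi j hj hij
    · rw [Nat.dist_eq_sub_of_le_right hij, inter_comm, mul_comm]; exact hcov j hj i hi hij
  have hmem : MemLp (fun ω => ∑ j ∈ J, w j *
      ((A j).indicator (fun _ => (1 : ℝ)) ω - μ.real (A j))) 2 μ :=
    memLp_finsetSum J fun j hj => (hXL j hj).const_mul (w j)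
  apply Real.le_sqrt_of_sq_le
  refine (sq_integral_abs_le μ hmem).trans ?_
  have hexp : ∀ ω, (∑ j ∈ J, w j * ((A j).indicator (fun _ => (1 : ℝ)) ω - μ.real (A j))) ^ 2
      = ∑ i ∈ J, ∑ j ∈ J, (w i * w j) * (((A i).indicator (fun _ => (1 : ℝ)) ω - μ.real (A i)) *
        ((A j).indicator (fun _ => (1 : ℝ)) ω - μ.real (A j))) := by
    intro ω
    rw [sq, Finset.sum_mul_sum]
    exact Finset.sum_congr rfl fun i _ => Finset.sum_congr rfl fun j _ => by ring
  simp_rw [hexp]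
  have hinteg : ∀ i ∈ J, ∀ j ∈ J, Integrable (fun ω => (w i * w j) *
      (((A i).indicator (fun _ => (1 : ℝ)) ω - μ.real (A i)) *
        ((A j).indicator (fun _ => (1 : ℝ)) ω - μ.real (A j)))) μ :=
    fun i hi j hj => ((hXL i hi).integrable_mul (hXL j hj)).const_mul _
  rw [integral_finsetSum _ fun i hi => integrable_finsetSum _ (hinteg i hi)]
  calc ∑ i ∈ J, ∫ ω, ∑ j ∈ J, (w i * w j) *
      (((A i).indicator (fun _ => (1 : ℝ)) ω - μ.real (A i)) *
        ((A j).indicator (fun _ => (1 : ℝ)) ω - μ.real (A j))) ∂μ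
      ≤ ∑ i ∈ J, ∑ j ∈ J, |w i| * (W * β (Nat.dist i j)) := by
        refine Finset.sum_le_sum fun i hi => ?_
        rw [integral_finsetSum _ (hinteg i hi)]
        refine Finset.sum_le_sum fun j hj => ?_
        rw [integral_const_mul, integral_mul_centered_indicator μ (hA i hi) (hA j hj)]
        refine (le_abs_self _).trans ?_
        rw [abs_mul, abs_mul, mul_assoc]
        gcongr
        · exact hW j hj
        · exact hcov' i hi j hj
    _ = ∑ i ∈ J, |w i| * (W * ∑ j ∈ J, β (Nat.dist i j)) := by
        simp_rw [Finset.mul_sum]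
    _ ≤ ∑ i ∈ J, |w i| * (W * (2 * ∑' k, β k)) := by
        gcongr with i hi
        exact sum_comp_natDist_le hβ0 hβ J i
    _ = (∑ i ∈ J, |w i|) * (W * (2 * ∑' k, β k)) := by rw [Finset.sum_mul]
    _ ≤ V * (W * (2 * ∑' k, β k)) := by
        gcongr
        exact mul_nonneg hW0 (mul_nonneg zero_le_two (tsum_nonneg hβ0))
    _ = 2 * V * W * ∑' k, β k := by ring

end Covariance

section Paths

variable {Ω : Type*} (ε : ℕ → ℕ → Ω → ℝ)

lemma measurable_eps_pastField {n u t : ℕ} (hu : u ≤ t) :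
    Measurable[pastField ε n t] (ε n u) :=
  Measurable.of_comap_le (le_iSup₂_of_le u hu le_rfl)

lemma measurable_eps_futureField {n u t : ℕ} (hu : t ≤ u) :
    Measurable[futureField ε n t] (ε n u) :=
  Measurable.of_comap_le (le_iSup₂_of_le u hu le_rfl)

variable (v : ℝ → ℝ)

lemma measurable_aproc {m : MeasurableSpace Ω} {n t : ℕ} (hε : Measurable[m] (ε n t)) :
    Measurable[m] (aproc v ε n t) := by
  unfold aproc rproc
  refine Measurable.ite ?_ measurable_const measurable_const
  exact ((measurable_const.mul hε) (measurableSet_singleton 0)).compl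

lemma aproc_mul_eq_indicator (n s t : ℕ) (ω : Ω) :
    aproc v ε n s ω * aproc v ε n t ω
      = {ω | aproc v ε n s ω * aproc v ε n t ω = 1}.indicator (fun _ => (1 : ℝ)) ω := by
  unfold aproc indicator
  simp only [mem_ofPred_eq]
  split_ifs <;> simp_all

lemma aproc_nonneg (n t : ℕ) (ω : Ω) : 0 ≤ aproc v ε n t ω := by
  unfold aproc; split_ifs <;> norm_num

lemma aproc_le_one (n t : ℕ) (ω : Ω) : aproc v ε n t ω ≤ 1 := by
  unfold aproc; split_ifs <;> norm_num

lemma aproc_mul_self (n t : ℕ) (ω : Ω) : aproc v ε n t ω * aproc v ε n t ω = aproc v ε n t ω := by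
  unfold aproc; split_ifs <;> norm_num

end Paths

section Mixing

variable {Ω : Type*} [MeasurableSpace Ω] (μ : Measure Ω) (ε : ℕ → ℕ → Ω → ℝ)

lemma alphaMix_nonneg (h : ℕ) : 0 ≤ alphaMix μ ε h := by
  refine Real.iSup_nonneg fun n => Real.iSup_nonneg fun t => Real.sSup_nonneg ?_
  rintro x ⟨A, B, -, -, rfl⟩
  exact abs_nonneg _

/-- Bound on the covariances of events that depend on at most `h + 1` consecutive
innovations. -/
noncomputable def lagMix (h k : ℕ) : ℝ := if k < h then 1 else alphaMix μ ε (k - h)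

lemma lagMix_nonneg (h k : ℕ) : 0 ≤ lagMix μ ε h k := by
  unfold lagMix
  split_ifs
  · exact zero_le_one
  · exact alphaMix_nonneg μ ε _

lemma summable_lagMix (hα : Summable (alphaMix μ ε)) (h : ℕ) : Summable (lagMix μ ε h) := by
  rw [← summable_nat_add_iff h]
  refine hα.congr fun k => ?_
  simp [lagMix]

variable [IsProbabilityMeasure μ]

lemma abs_measure_inter_sub_mul_le_one (A B : Set Ω) :
    |(μ (A ∩ B)).toReal - (μ A).toReal * (μ B).toReal| ≤ 1 := by
  have h1 : (μ (A ∩ B)).toReal ≤ 1 := measureReal_le_one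
  have h2 : (μ A).toReal ≤ 1 := measureReal_le_one
  have h3 : (μ B).toReal ≤ 1 := measureReal_le_one
  have h4 : 0 ≤ (μ (A ∩ B)).toReal := ENNReal.toReal_nonneg
  have h5 : 0 ≤ (μ A).toReal := ENNReal.toReal_nonneg
  have h6 : 0 ≤ (μ B).toReal := ENNReal.toReal_nonneg
  rw [abs_le]
  constructor <;> nlinarith

lemma abs_measure_inter_sub_mul_le_alphaMix {n t h : ℕ} {A B : Set Ω}
    (hA : MeasurableSet[pastField ε n t] A) (hB : MeasurableSet[futureField ε n (t + h)] B) :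
    |(μ (A ∩ B)).toReal - (μ A).toReal * (μ B).toReal| ≤ alphaMix μ ε h := by
  have hb : ∀ n t, sSup {x : ℝ | ∃ A B : Set Ω,
      MeasurableSet[pastField ε n t] A ∧ MeasurableSet[futureField ε n (t + h)] B ∧
      x = |(μ (A ∩ B)).toReal - (μ A).toReal * (μ B).toReal|} ≤ 1 := by
    intro n t
    refine Real.sSup_le ?_ zero_le_one
    rintro x ⟨A, B, -, -, rfl⟩
    exact abs_measure_inter_sub_mul_le_one μ A B
  unfold alphaMix
  refine le_trans ?_ (le_ciSup (f := fun n => ⨆ t : ℕ, sSup {x : ℝ | ∃ A B : Set Ω,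
    MeasurableSet[pastField ε n t] A ∧ MeasurableSet[futureField ε n (t + h)] B ∧
    x = |(μ (A ∩ B)).toReal - (μ A).toReal * (μ B).toReal|}) ⟨1, ?_⟩ n)
  · refine le_trans ?_ (le_ciSup ⟨1, ?_⟩ t)
    · refine le_csSup ⟨1, ?_⟩ ⟨A, B, hA, hB, rfl⟩
      rintro x ⟨A, B, -, -, rfl⟩
      exact abs_measure_inter_sub_mul_le_one μ A B
    · rintro x ⟨t, rfl⟩
      exact hb n t
  · rintro x ⟨n, rfl⟩
    exact Real.iSup_le (fun t => hb n t) zero_le_one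

lemma alphaMix_le_one (h : ℕ) : alphaMix μ ε h ≤ 1 := by
  refine Real.iSup_le (fun n => Real.iSup_le (fun t => Real.sSup_le ?_ zero_le_one) zero_le_one)
    zero_le_one
  rintro x ⟨A, B, -, -, rfl⟩
  exact abs_measure_inter_sub_mul_le_one μ A B

lemma summable_alphaMix_of_rpow {μ2 : ℝ} (hμ2 : 1 ≤ μ2)
    (hmix : Summable (fun h : ℕ => alphaMix μ ε h ^ (1 - 1 / (2 * μ2)))) :
    Summable (alphaMix μ ε) := by
  refine hmix.of_nonneg_of_le (alphaMix_nonneg μ ε) fun h => ?_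
  have h0 : 0 < 1 / (2 * μ2) := by positivity
  exact Real.self_le_rpow_of_le_one (alphaMix_nonneg μ ε h) (alphaMix_le_one μ ε h) (by linarith)

/-- Events of the form `{ε_j ∈ S, ε_{j-h} ∈ S'}` are weakly dependent. -/
lemma abs_cov_le_lagMix {n h : ℕ} {A : ℕ → Set Ω} {i j : ℕ} (hij : i ≤ j)
    (hA : MeasurableSet[pastField ε n i] (A i))
    (hB : MeasurableSet[futureField ε n (j - h)] (A j)) :
    |μ.real (A i ∩ A j) - μ.real (A i) * μ.real (A j)| ≤ lagMix μ ε h (j - i) := by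
  unfold lagMix
  split_ifs with hlt
  · exact abs_measure_inter_sub_mul_le_one μ _ _
  · refine abs_measure_inter_sub_mul_le_alphaMix μ ε (t := i) hA ?_
    have : i + (j - i - h) = j - h := by omega
    rwa [this]

end Mixing

section Kernel

variable {K : ℝ → ℝ} {b : ℕ → ℝ}

lemma tendsto_nat_mul_bandwidth (hb_pos : ∀ n, 0 < b n) (hb0 : Tendsto b atTop (nhds 0))
    (hnb : Tendsto (fun n : ℕ => 1 / ((n : ℝ) * (b n) ^ 2)) atTop (nhds 0)) :
    Tendsto (fun n : ℕ => (n : ℝ) * b n) atTop atTop := by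
  have h1 : Tendsto (fun n : ℕ => ((n : ℝ) * b n)⁻¹) atTop (nhds 0) := by
    have := hnb.mul hb0
    rw [mul_zero] at this
    refine this.congr fun n => ?_
    have := (hb_pos n).ne'
    rcases Nat.eq_zero_or_pos n with rfl | hn
    · simp
    · have : (n : ℝ) ≠ 0 := by positivity
      field_simp
  have h2 : Tendsto (fun n : ℕ => ((n : ℝ) * b n)⁻¹) atTop (nhdsWithin 0 (Ioi 0)) := by
    refine tendsto_nhdsWithin_iff.2 ⟨h1, ?_⟩
    filter_upwards [eventually_gt_atTop 0] with n hn
    have := hb_pos n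
    have : (0 : ℝ) < n := by exact_mod_cast hn
    simp only [mem_Ioi]; positivity
  exact (tendsto_inv_nhdsGT_zero.comp h2).congr fun n => by simp

lemma exists_forall_abs_gt_eq_zero (hK_supp : HasCompactSupport K) :
    ∃ L : ℝ, 0 < L ∧ ∀ z, L < |z| → K z = 0 := by
  obtain ⟨L, hL⟩ := hK_supp.isCompact.isBounded.exists_norm_le
  refine ⟨max L 1, by positivity, fun z hz => ?_⟩
  by_contra hne
  have := hL z (subset_tsupport K hne)
  rw [Real.norm_eq_abs] at this
  exact absurd (this.trans (le_max_left L 1)) (not_le.2 hz)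

lemma exists_Icc_kernel_ge (hK_cont : Continuous K) (hK_nonneg : ∀ z, 0 ≤ K z)
    (hK_int : ∫ z : ℝ, K z = 1) :
    ∃ κ x y : ℝ, 0 < κ ∧ x < y ∧ ∀ z ∈ Icc x y, κ ≤ K z := by
  obtain ⟨z₀, hz₀⟩ : ∃ z, K z ≠ 0 := by
    by_contra! hcon
    simp [hcon] at hK_int
  have hpos : 0 < K z₀ := lt_of_le_of_ne (hK_nonneg z₀) (Ne.symm hz₀)
  have hev : ∀ᶠ z in nhds z₀, K z₀ / 2 < K z :=
    hK_cont.continuousAt.eventually (lt_mem_nhds (half_lt_self hpos))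
  obtain ⟨δ, hδ, hball⟩ := Metric.eventually_nhds_iff.1 hev
  refine ⟨K z₀ / 2, z₀ - δ / 2, z₀ + δ / 2, half_pos hpos, by linarith, fun z hz => ?_⟩
  refine (hball ?_).le
  rw [Real.dist_eq, abs_lt]
  constructor <;> linarith [hz.1, hz.2]

lemma Kw_nonneg (hK_nonneg : ∀ z, 0 ≤ K z) (n t i : ℕ) : 0 ≤ Kw K b n t i := by
  unfold Kw
  split_ifs
  · exact le_rfl
  · exact hK_nonneg _

lemma wgt_nonneg (hK_nonneg : ∀ z, 0 ≤ K z) (n t i : ℕ) : 0 ≤ wgt K b n t i :=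
  div_nonneg (Kw_nonneg hK_nonneg n t i) (Finset.sum_nonneg fun _ _ => Kw_nonneg hK_nonneg n t _)

lemma sum_wgt_le_one (n t : ℕ) :
    ∑ j ∈ Finset.Icc 1 n, wgt K b n t j ≤ 1 := by
  unfold wgt
  rw [← Finset.sum_div]
  exact div_self_le_one _

/-- The total kernel mass at an interior point is of order at least `n b`. -/
lemma exists_le_sum_Kw (hK_cont : Continuous K) (hK_nonneg : ∀ z, 0 ≤ K z)
    (hK_int : ∫ z : ℝ, K z = 1) (hb_pos : ∀ n, 0 < b n) (hb0 : Tendsto b atTop (nhds 0))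
    (hB : Tendsto (fun n : ℕ => (n : ℝ) * b n) atTop atTop) {s : ℝ} (hs : s ∈ Ioo (0 : ℝ) 1) :
    ∃ C : ℝ, 0 < C ∧ ∀ᶠ n : ℕ in atTop,
      C * ((n : ℝ) * b n) ≤ ∑ i ∈ Finset.Icc 1 n, Kw K b n ⌈(n : ℝ) * s⌉₊ i := by
  obtain ⟨κ, x, y, hκ, hxy, hge⟩ := exists_Icc_kernel_ge hK_cont hK_nonneg hK_int
  refine ⟨κ * ((y - x) / 2), by nlinarith, ?_⟩
  have ht := tendsto_ceil_mul_div hs.1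
  have hlo : ∀ᶠ n : ℕ in atTop, 0 < ((⌈(n : ℝ) * s⌉₊ : ℕ) : ℝ) / n - y * b n := by
    have := ht.sub (hb0.const_mul y)
    rw [mul_zero, sub_zero] at this
    exact this.eventually (lt_mem_nhds hs.1)
  have hhi : ∀ᶠ n : ℕ in atTop, ((⌈(n : ℝ) * s⌉₊ : ℕ) : ℝ) / n - x * b n < 1 := by
    have := ht.sub (hb0.const_mul x)
    rw [mul_zero, sub_zero] at this
    exact this.eventually (gt_mem_nhds hs.2)
  filter_upwards [hlo, hhi, eventually_gt_atTop 0, hB.eventually_ge_atTop (4 / (y - x))]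
    with n h1 h2 hn h3
  have hn' : (0 : ℝ) < n := by exact_mod_cast hn
  set t := ⌈(n : ℝ) * s⌉₊
  have hBpos : 0 < (n : ℝ) * b n := mul_pos hn' (hb_pos n)
  set B := (n : ℝ) * b n with hBdef
  have h1' : 0 < (t : ℝ) - y * B := by
    have := mul_pos hn' h1
    rw [mul_sub, mul_div_cancel₀ _ hn'.ne'] at this
    rw [hBdef]; linarith
  have h2' : (t : ℝ) - x * B < n := by
    have := mul_lt_mul_of_pos_left h2 hn'
    rw [mul_sub, mul_div_cancel₀ _ hn'.ne'] at this
    rw [hBdef]; linarith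
  have hyx : 0 < y - x := sub_pos.2 hxy
  have h3' : 4 ≤ (y - x) * B := by
    have := (div_le_iff₀ hyx).1 h3
    linarith
  set S := (Finset.Icc ⌈(t : ℝ) - y * B⌉₊ ⌊(t : ℝ) - x * B⌋₊).erase t with hS
  have hxB : x * B < y * B := mul_lt_mul_of_pos_right hxy hBpos
  have hsub : S ⊆ Finset.Icc 1 n := by
    intro i hi
    simp only [hS, Finset.mem_erase, Finset.mem_Icc] at hi
    have e1 : 0 < ⌈(t : ℝ) - y * B⌉₊ := Nat.ceil_pos.2 h1'
    have e2 : ⌊(t : ℝ) - x * B⌋₊ ≤ n := Nat.floor_le_of_le h2'.le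
    exact Finset.mem_Icc.2 ⟨by omega, by omega⟩
  have hcard : (y - x) / 2 * B ≤ (S.card : ℝ) := by
    have e1 : (Finset.Icc ⌈(t : ℝ) - y * B⌉₊ ⌊(t : ℝ) - x * B⌋₊).card - 1 ≤ S.card :=
      Finset.pred_card_le_card_erase
    rw [Nat.card_Icc] at e1
    have e2 : (⌈(t : ℝ) - y * B⌉₊ : ℝ) < (t : ℝ) - y * B + 1 := Nat.ceil_lt_add_one h1'.le
    have e3 : (t : ℝ) - x * B < ⌊(t : ℝ) - x * B⌋₊ + 1 := Nat.lt_floor_add_one _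
    have e4 : ⌊(t : ℝ) - x * B⌋₊ ≤ S.card + ⌈(t : ℝ) - y * B⌉₊ := by omega
    have e5 : (⌊(t : ℝ) - x * B⌋₊ : ℝ) ≤ S.card + ⌈(t : ℝ) - y * B⌉₊ := by exact_mod_cast e4
    nlinarith
  calc κ * ((y - x) / 2) * B ≤ (S.card : ℝ) * κ := by nlinarith
    _ = ∑ _i ∈ S, κ := by simp
    _ ≤ ∑ i ∈ S, Kw K b n t i := by
        refine Finset.sum_le_sum fun i hi => ?_
        simp only [hS, Finset.mem_erase, Finset.mem_Icc] at hi
        unfold Kw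
        rw [if_neg (Ne.symm hi.1)]
        apply hge
        have e1 : (t : ℝ) - y * B ≤ i := Nat.ceil_le.1 hi.2.1
        have e2 : (i : ℝ) ≤ (t : ℝ) - x * B :=
          (Nat.cast_le.2 hi.2.2).trans (Nat.floor_le (by linarith))
        rw [← hBdef]
        exact ⟨by rw [le_div_iff₀ hBpos]; linarith, by rw [div_le_iff₀ hBpos]; linarith⟩
    _ ≤ _ := Finset.sum_le_sum_of_subset_of_nonneg hsub fun i _ _ => Kw_nonneg hK_nonneg n t i

/-- The kernel weights concentrate around interior points of continuity. -/
lemma eventually_wgt_eq_zero (hK_supp : HasCompactSupport K) (hb_pos : ∀ n, 0 < b n)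
    (hb0 : Tendsto b atTop (nhds 0)) {s : ℝ} (hs : 0 < s) {δ : ℝ} (hδ : 0 < δ) :
    ∀ᶠ n : ℕ in atTop, ∀ j : ℕ, δ ≤ |(j : ℝ) / n - s| → wgt K b n ⌈(n : ℝ) * s⌉₊ j = 0 := by
  obtain ⟨L, hL, hK0⟩ := exists_forall_abs_gt_eq_zero hK_supp
  have h1 : ∀ᶠ n : ℕ in atTop, |((⌈(n : ℝ) * s⌉₊ : ℕ) : ℝ) / n - s| < δ / 2 := by
    have := Metric.tendsto_nhds.1 (tendsto_ceil_mul_div hs) (δ / 2) (half_pos hδ)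
    simpa [Real.dist_eq] using this
  have h2 : ∀ᶠ n : ℕ in atTop, L * b n < δ / 2 := by
    have := hb0.const_mul L
    rw [mul_zero] at this
    exact this.eventually (gt_mem_nhds (half_pos hδ))
  filter_upwards [h1, h2, eventually_gt_atTop 0] with n h1 h2 hn j hj
  have hn' : (0 : ℝ) < n := by exact_mod_cast hn
  have hKw : Kw K b n ⌈(n : ℝ) * s⌉₊ j = 0 := by
    unfold Kw
    split_ifs
    · rfl
    apply hK0
    have e1 : (((⌈(n : ℝ) * s⌉₊ : ℕ) : ℝ) - j) / (n * b n)
        = (((⌈(n : ℝ) * s⌉₊ : ℕ) : ℝ) / n - (j : ℝ) / n) / b n := by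
      have := (hb_pos n).ne'
      field_simp
    rw [e1, abs_div, abs_of_pos (hb_pos n), lt_div_iff₀ (hb_pos n)]
    have e2 := abs_sub_le ((j : ℝ) / n) (((⌈(n : ℝ) * s⌉₊ : ℕ) : ℝ) / n) s
    rw [abs_sub_comm ((j : ℝ) / n) (((⌈(n : ℝ) * s⌉₊ : ℕ) : ℝ) / n)] at e2
    linarith
  rw [wgt, hKw, zero_div]

/-- The smoothing bias vanishes at interior points of continuity. -/
lemma tendsto_sum_wgt_mul_sub (hK_cont : Continuous K) (hK_supp : HasCompactSupport K)
    (hK_nonneg : ∀ z, 0 ≤ K z)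
    (hK_int : ∫ z : ℝ, K z = 1) (hb_pos : ∀ n, 0 < b n) (hb0 : Tendsto b atTop (nhds 0))
    (hB : Tendsto (fun n : ℕ => (n : ℝ) * b n) atTop atTop) {s : ℝ} (hs : s ∈ Ioo (0 : ℝ) 1)
    {f : ℝ → ℝ} (hf : ContinuousAt f s) (h : ℕ) :
    Tendsto (fun n : ℕ => ∑ j ∈ Finset.Icc (h + 1) n,
        wgt K b n ⌈(n : ℝ) * s⌉₊ j * f ((j : ℝ) / n) - f (((⌈(n : ℝ) * s⌉₊ : ℕ) : ℝ) / n))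
      atTop (nhds 0) := by
  obtain ⟨C, hC, hsum⟩ := exists_le_sum_Kw hK_cont hK_nonneg hK_int hb_pos hb0 hB hs
  have h1 : Tendsto (fun n : ℕ => f (((⌈(n : ℝ) * s⌉₊ : ℕ) : ℝ) / n)) atTop (nhds (f s)) :=
    hf.tendsto.comp (tendsto_ceil_mul_div hs.1)
  suffices h2 : Tendsto (fun n : ℕ => ∑ j ∈ Finset.Icc (h + 1) n,
      wgt K b n ⌈(n : ℝ) * s⌉₊ j * f ((j : ℝ) / n)) atTop (nhds (f s)) by
    simpa using h2.sub h1
  rw [Metric.tendsto_nhds]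
  intro η hη
  obtain ⟨δ, hδ, hball⟩ := Metric.continuousAt_iff.1 hf (η / 2) (half_pos hη)
  have hs2 : 0 < s / 2 := half_pos hs.1
  have hsmall : ∀ᶠ n : ℕ in atTop, (h : ℝ) / n < s / 2 :=
    (tendsto_const_div_atTop_nhds_zero_nat (h : ℝ)).eventually (gt_mem_nhds hs2)
  filter_upwards [hsum, hsmall, eventually_gt_atTop 0,
    eventually_wgt_eq_zero hK_supp hb_pos hb0 hs.1 hδ,
    eventually_wgt_eq_zero hK_supp hb_pos hb0 hs.1 hs2] with n hn1 hn2 hn hn3 hn4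
  have hn' : (0 : ℝ) < n := by exact_mod_cast hn
  set t := ⌈(n : ℝ) * s⌉₊
  have hpos : 0 < ∑ i ∈ Finset.Icc 1 n, Kw K b n t i :=
    lt_of_lt_of_le (mul_pos hC (mul_pos hn' (hb_pos n))) hn1
  have hone : ∑ j ∈ Finset.Icc (h + 1) n, wgt K b n t j = 1 := by
    have e1 : ∑ j ∈ Finset.Icc 1 n, wgt K b n t j = 1 := by
      unfold wgt
      rw [← Finset.sum_div, div_self hpos.ne']
    rw [← e1]
    refine Finset.sum_subset (Finset.Icc_subset_Icc_left (by omega)) fun j hj hj' => ?_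
    refine hn4 j ?_
    simp only [Finset.mem_Icc, not_and, not_le] at hj hj'
    have hjh : j ≤ h := by
      by_contra hcon
      have := hj' (by omega)
      omega
    have : (j : ℝ) / n ≤ (h : ℝ) / n := by gcongr
    rw [abs_sub_comm]
    exact le_trans (by linarith) (le_abs_self _)
  have hdiff : ∑ j ∈ Finset.Icc (h + 1) n, wgt K b n t j * f ((j : ℝ) / n) - f s
      = ∑ j ∈ Finset.Icc (h + 1) n, wgt K b n t j * (f ((j : ℝ) / n) - f s) := by
    simp_rw [mul_sub]
    rw [Finset.sum_sub_distrib, ← Finset.sum_mul, hone, one_mul]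
  rw [Real.dist_eq, hdiff]
  calc |∑ j ∈ Finset.Icc (h + 1) n, wgt K b n t j * (f ((j : ℝ) / n) - f s)|
      ≤ ∑ j ∈ Finset.Icc (h + 1) n, wgt K b n t j * (η / 2) := by
        refine (Finset.abs_sum_le_sum_abs _ _).trans (Finset.sum_le_sum fun j _ => ?_)
        rw [abs_mul, abs_of_nonneg (wgt_nonneg hK_nonneg n t j)]
        by_cases hj : |(j : ℝ) / n - s| < δ
        · have := hball (x := (j : ℝ) / n) (by rwa [Real.dist_eq])
          rw [Real.dist_eq] at this
          exact mul_le_mul_of_nonneg_left this.le (wgt_nonneg hK_nonneg n t j)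
        · rw [hn3 j (not_lt.1 hj)]; simp
    _ = η / 2 := by rw [← Finset.sum_mul, hone, one_mul]
    _ < η := half_lt_self hη

end Kernel

section KernelEstimator

variable {Ω : Type*} {v : ℝ → ℝ} {ε : ℕ → ℕ → Ω → ℝ} {K : ℝ → ℝ} {b : ℕ → ℝ}

lemma phat_eq_phat2 (n t : ℕ) (ω : Ω) : phat v ε K b n t ω = phat2 v ε K b n 0 t ω := by
  simp [phat, phat2, aproc_mul_self]

lemma phat2_nonneg (hK_nonneg : ∀ z, 0 ≤ K z) (n h t : ℕ) (ω : Ω) :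
    0 ≤ phat2 v ε K b n h t ω :=
  Finset.sum_nonneg fun _ _ => mul_nonneg (wgt_nonneg hK_nonneg _ _ _)
    (mul_nonneg (aproc_nonneg ε v _ _ _) (aproc_nonneg ε v _ _ _))

lemma phat2_le_phat (hK_nonneg : ∀ z, 0 ≤ K z) (n h t : ℕ) (ω : Ω) :
    phat2 v ε K b n h t ω ≤ phat v ε K b n t ω := by
  unfold phat2 phat
  refine (Finset.sum_le_sum (g := fun j => wgt K b n t j * aproc v ε n j ω) fun j _ => ?_).trans
    (Finset.sum_le_sum_of_subset_of_nonneg (Finset.Icc_subset_Icc_left (by omega)) fun j _ _ =>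
      mul_nonneg (wgt_nonneg hK_nonneg _ _ _) (aproc_nonneg ε v _ _ _))
  exact mul_le_mul_of_nonneg_left
    (mul_le_of_le_one_right (aproc_nonneg ε v _ _ _) (aproc_le_one ε v _ _ _))
    (wgt_nonneg hK_nonneg _ _ _)

lemma abs_ratio_sub_le (hK_nonneg : ∀ z, 0 ≤ K z) {c p q : ℝ} (hc : 0 < c) (hp : c ≤ p)
    (hq : |q| ≤ 1) (n h t : ℕ) (ω : Ω) :
    |phat2 v ε K b n h t ω / phat v ε K b n t ω - q / p| ≤ 1 + c⁻¹ := by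
  have h0 := phat2_nonneg (v := v) (ε := ε) (b := b) hK_nonneg n h t ω
  have h1 := phat2_le_phat (v := v) (ε := ε) (b := b) hK_nonneg n h t ω
  refine (abs_sub _ _).trans (add_le_add ?_ ?_)
  · rw [abs_of_nonneg (div_nonneg h0 (h0.trans h1))]
    exact div_le_one_of_le₀ h1 (h0.trans h1)
  · rw [abs_div, abs_of_pos (hc.trans_le hp), div_eq_mul_inv]
    have hp0 : 0 < p := hc.trans_le hp
    calc |q| * p⁻¹ ≤ 1 * c⁻¹ := by gcongr
      _ = c⁻¹ := one_mul _

end KernelEstimator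

lemma abs_div_sub_div_le {P Q p q c : ℝ} (hc : 0 < c) (hp : c ≤ p) (hQ : 0 ≤ Q) (hQP : Q ≤ P) :
    |Q / P - q / p| ≤ c⁻¹ * (|P - p| + |Q - q|) := by
  have hp0 : 0 < p := hc.trans_le hp
  have hP : 0 ≤ P := hQ.trans hQP
  have h1 : |Q / P| ≤ 1 := by
    rw [abs_of_nonneg (div_nonneg hQ hP)]
    exact div_le_one_of_le₀ hQP hP
  have h2 : Q / P * P = Q := by
    rcases hP.eq_or_lt with h0 | h0
    · have : Q = 0 := le_antisymm (by rwa [← h0] at hQP) hQ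
      simp [this]
    · exact div_mul_cancel₀ _ h0.ne'
  have h3 : Q / P - q / p = p⁻¹ * (-(Q / P * (P - p)) + (Q - q)) := by
    rw [mul_sub, h2]
    field_simp
    ring
  rw [h3, abs_mul, abs_of_pos (inv_pos.2 hp0)]
  have h4 : |-(Q / P * (P - p)) + (Q - q)| ≤ |P - p| + |Q - q| := by
    refine (abs_add_le _ _).trans ?_
    rw [abs_neg, abs_mul]
    gcongr
    exact mul_le_of_le_one_left (abs_nonneg _) h1
  gcongr

section Consistency

variable {Ω : Type*} [MeasurableSpace Ω] (μ : Measure Ω) [IsProbabilityMeasure μ]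
  {v : ℝ → ℝ} {ε : ℕ → ℕ → Ω → ℝ} {K : ℝ → ℝ} {b : ℕ → ℝ}

lemma measurable_phat2 (hε_meas : ∀ n t, Measurable (ε n t)) (n h t : ℕ) :
    Measurable (phat2 v ε K b n h t) := by
  unfold phat2
  have := fun j => measurable_aproc ε v (hε_meas n j)
  fun_prop

lemma measurable_phat (hε_meas : ∀ n t, Measurable (ε n t)) (n t : ℕ) :
    Measurable (phat v ε K b n t) := by
  unfold phat
  have := fun j => measurable_aproc ε v (hε_meas n j)
  fun_prop

/-- `L¹`-consistency of the kernel estimator at interior points of continuity. -/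
lemma tendsto_integral_abs_phat2_sub (hε_meas : ∀ n t, Measurable (ε n t))
    (hα : Summable (alphaMix μ ε)) {R : ℝ}
    (hK_cont : Continuous K) (hK_supp : HasCompactSupport K)
    (hK_nonneg : ∀ z, 0 ≤ K z) (hK_le : ∀ z, K z ≤ R)
    (hK_int : ∫ z : ℝ, K z = 1) (hb_pos : ∀ n, 0 < b n) (hb0 : Tendsto b atTop (nhds 0))
    (hB : Tendsto (fun n : ℕ => (n : ℝ) * b n) atTop atTop) {s : ℝ} (hs : s ∈ Ioo (0 : ℝ) 1)
    {f : ℝ → ℝ} (hf : ContinuousAt f s) {h : ℕ}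
    (hprob : ∀ n t : ℕ, h < t → t ≤ n →
      (μ {ω | aproc v ε n t ω * aproc v ε n (t - h) ω = 1}).toReal = f ((t : ℝ) / n)) :
    Tendsto (fun n : ℕ => ∫ ω, |phat2 v ε K b n h ⌈(n : ℝ) * s⌉₊ ω
      - f (((⌈(n : ℝ) * s⌉₊ : ℕ) : ℝ) / n)| ∂μ) atTop (nhds 0) := by
  obtain ⟨C, hC, hsum⟩ := exists_le_sum_Kw hK_cont hK_nonneg hK_int hb_pos hb0 hB hs
  have hbias := tendsto_sum_wgt_mul_sub hK_cont hK_supp hK_nonneg hK_int hb_pos hb0 hB hs hf h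
  have hR : 0 ≤ R := (hK_nonneg 0).trans (hK_le 0)
  have hvar : Tendsto (fun n : ℕ => √(2 * 1 * (R / (C * ((n : ℝ) * b n))) *
      ∑' k, lagMix μ ε h k)) atTop (nhds 0) := by
    have e1 : Tendsto (fun n : ℕ => R / (C * ((n : ℝ) * b n))) atTop (nhds 0) :=
      (hB.const_mul_atTop hC).const_div_atTop R
    have e2 := ((e1.const_mul (2 * 1)).mul_const (∑' k, lagMix μ ε h k)).sqrt
    simpa using e2
  have hlim := hvar.add hbias.abs
  rw [abs_zero, add_zero] at hlim
  refine squeeze_zero' (Eventually.of_forall fun n => integral_nonneg fun ω => abs_nonneg _) ?_ hlim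
  filter_upwards [hsum, eventually_gt_atTop 0] with n hn1 hn
  have hn' : (0 : ℝ) < n := by exact_mod_cast hn
  have hBn : 0 < (n : ℝ) * b n := mul_pos hn' (hb_pos n)
  set t := ⌈(n : ℝ) * s⌉₊
  set A : ℕ → Set Ω := fun j => {ω | aproc v ε n j ω * aproc v ε n (j - h) ω = 1} with hAdef
  have hAm : ∀ j, MeasurableSet (A j) := fun j =>
    ((measurable_aproc ε v (hε_meas n j)).mul (measurable_aproc ε v (hε_meas n (j - h))))
      (measurableSet_singleton 1)
  have hpast : ∀ j, MeasurableSet[pastField ε n j] (A j) := fun j =>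
    ((measurable_aproc ε v (measurable_eps_pastField ε le_rfl)).mul
      (measurable_aproc ε v (measurable_eps_pastField ε (Nat.sub_le j h))))
      (measurableSet_singleton 1)
  have hfut : ∀ j, MeasurableSet[futureField ε n (j - h)] (A j) := fun j =>
    ((measurable_aproc ε v (measurable_eps_futureField ε (Nat.sub_le j h))).mul
      (measurable_aproc ε v (measurable_eps_futureField ε le_rfl)))
      (measurableSet_singleton 1)
  have hdev := integral_abs_sum_centered_indicator_le μ (J := Finset.Icc (h + 1) n)
    (w := wgt K b n t) (A := A) (fun j _ => hAm j) (lagMix_nonneg μ ε h)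
    (summable_lagMix μ ε hα h)
    (fun i _ j _ hij => abs_cov_le_lagMix μ ε hij (hpast i) (hfut j))
    (V := 1) (W := R / (C * ((n : ℝ) * b n))) (by positivity)
    (fun j _ => by
      rw [abs_of_nonneg (wgt_nonneg hK_nonneg n t j)]
      refine div_le_div₀ hR ?_ (by positivity) hn1
      unfold Kw
      split_ifs
      · exact hR
      · exact hK_le _)
    (by
      rw [Finset.sum_congr rfl fun j _ => abs_of_nonneg (wgt_nonneg hK_nonneg n t j)]
      refine (Finset.sum_le_sum_of_subset_of_nonneg (Finset.Icc_subset_Icc_left (by omega))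
        fun j _ _ => wgt_nonneg hK_nonneg n t j).trans (sum_wgt_le_one n t))
  have hinteg : Integrable (fun ω => |∑ j ∈ Finset.Icc (h + 1) n, wgt K b n t j *
      ((A j).indicator (fun _ => (1 : ℝ)) ω - μ.real (A j))|) μ := by
    refine Integrable.abs (integrable_finsetSum _ fun j _ => Integrable.const_mul ?_ _)
    exact ((integrable_const 1).indicator (hAm j)).sub (integrable_const _)
  have hpt : ∀ ω, phat2 v ε K b n h t ω - f ((t : ℝ) / n)
      = ∑ j ∈ Finset.Icc (h + 1) n, wgt K b n t j *
          ((A j).indicator (fun _ => (1 : ℝ)) ω - μ.real (A j))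
        + (∑ j ∈ Finset.Icc (h + 1) n, wgt K b n t j * f ((j : ℝ) / n) - f ((t : ℝ) / n)) := by
    intro ω
    have e1 : ∑ j ∈ Finset.Icc (h + 1) n, wgt K b n t j * f ((j : ℝ) / n)
        = ∑ j ∈ Finset.Icc (h + 1) n, wgt K b n t j * μ.real (A j) := by
      refine Finset.sum_congr rfl fun j hj => ?_
      rw [Finset.mem_Icc] at hj
      rw [← hprob n j (by omega) hj.2]
      rfl
    have e2 : phat2 v ε K b n h t ω = ∑ j ∈ Finset.Icc (h + 1) n, wgt K b n t j *
        (A j).indicator (fun _ => (1 : ℝ)) ω :=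
      Finset.sum_congr rfl fun j _ => by rw [aproc_mul_eq_indicator]
    rw [e1, e2]
    simp_rw [mul_sub]
    rw [Finset.sum_sub_distrib]
    ring
  refine le_trans (integral_mono_of_nonneg (Eventually.of_forall fun ω => abs_nonneg _)
    (hinteg.add (integrable_const |∑ j ∈ Finset.Icc (h + 1) n, wgt K b n t j * f ((j : ℝ) / n)
      - f ((t : ℝ) / n)|)) (Eventually.of_forall fun ω => ?_)) ?_
  · simp only [Pi.add_apply]
    rw [hpt ω]
    exact abs_add_le _ _
  · simp only [Pi.add_apply]
    rw [integral_add hinteg (integrable_const _)]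
    simp only [integral_const, probReal_univ, one_smul]
    gcongr

end Consistency

section Moments

variable {Ω : Type*} [MeasurableSpace Ω] (μ : Measure Ω)

lemma sq_le_rpow_div_of_lt {ν T x : ℝ} (hν : 0 < ν) (hT : 0 < T) (hx : T < x ^ 2) :
    x ^ 2 ≤ |x| ^ (2 + 2 * ν) / T ^ ν := by
  have h1 : |x| ^ (2 + 2 * ν) = x ^ 2 * (x ^ 2) ^ ν := by
    have hpos : 0 < |x| := by
      rw [abs_pos]; rintro rfl; norm_num at hx; linarith
    rw [Real.rpow_add hpos, Real.rpow_mul hpos.le, Real.rpow_two, sq_abs]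
  rw [h1, le_div_iff₀ (Real.rpow_pos_of_pos hT ν)]
  gcongr

lemma sq_le_one_add_rpow {ν x : ℝ} (hν : 0 < ν) : x ^ 2 ≤ 1 + |x| ^ (2 + 2 * ν) := by
  have h0 : 0 ≤ |x| ^ (2 + 2 * ν) := Real.rpow_nonneg (abs_nonneg x) _
  rcases le_or_gt (x ^ 2) 1 with h | h
  · linarith
  · have := sq_le_rpow_div_of_lt hν one_pos h
    rw [Real.one_rpow, div_one] at this
    linarith

lemma integrable_rpow_and_integral_le {X : Ω → ℝ} (hX : Measurable X) {p M : ℝ} (hM : 0 ≤ M)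
    (h : ∫⁻ ω, ENNReal.ofReal (|X ω| ^ p) ∂μ ≤ ENNReal.ofReal M) :
    Integrable (fun ω => |X ω| ^ p) μ ∧ ∫ ω, |X ω| ^ p ∂μ ≤ M := by
  have hm : Measurable fun ω => |X ω| ^ p := by fun_prop
  have h0 : ∀ ω, 0 ≤ |X ω| ^ p := fun ω => Real.rpow_nonneg (abs_nonneg _) _
  refine ⟨⟨hm.aestronglyMeasurable, ?_⟩, ?_⟩
  · rw [hasFiniteIntegral_iff_ofReal (Eventually.of_forall h0)]
    exact h.trans_lt ENNReal.ofReal_lt_top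
  · rw [integral_eq_lintegral_of_nonneg_ae (Eventually.of_forall h0) hm.aestronglyMeasurable]
    exact ENNReal.toReal_le_of_le_ofReal hM h

variable [IsProbabilityMeasure μ]

lemma integrable_sq_of_rpow {X : Ω → ℝ} (hX : Measurable X) {ν : ℝ} (hν : 0 < ν)
    (h : Integrable (fun ω => |X ω| ^ (2 + 2 * ν)) μ) : Integrable (fun ω => X ω ^ 2) μ := by
  refine ((integrable_const 1).add h).mono' (by fun_prop) (Eventually.of_forall fun ω => ?_)
  rw [Real.norm_eq_abs, abs_of_nonneg (sq_nonneg _)]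
  exact sq_le_one_add_rpow hν

/-- Uniform integrability of squares combined with `L¹`-convergence of bounded factors. -/
lemma tendsto_integral_sq_mul_abs {ν M C : ℝ} (hν : 0 < ν) (hM : 0 ≤ M) (hC : 0 ≤ C)
    {X D : ℕ → Ω → ℝ} (hX : ∀ n, Measurable (X n)) (hD : ∀ n, Measurable (D n))
    (hmom : ∀ᶠ n in atTop, ∫⁻ ω, ENNReal.ofReal (|X n ω| ^ (2 + 2 * ν)) ∂μ ≤ ENNReal.ofReal M)
    (hDC : ∀ᶠ n in atTop, ∀ ω, |D n ω| ≤ C)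
    (hlim : Tendsto (fun n => ∫ ω, |D n ω| ∂μ) atTop (nhds 0)) :
    Tendsto (fun n => ∫ ω, X n ω ^ 2 * |D n ω| ∂μ) atTop (nhds 0) := by
  rw [Metric.tendsto_nhds]
  intro η hη
  obtain ⟨T, hT, hTη⟩ : ∃ T : ℝ, 0 < T ∧ C * (M / T ^ ν) < η / 2 := by
    have e1 : Tendsto (fun T : ℝ => C * (M / T ^ ν)) atTop (nhds (C * 0)) :=
      ((tendsto_rpow_atTop hν).const_div_atTop M).const_mul C
    rw [mul_zero] at e1
    exact ((eventually_gt_atTop 0).and (e1.eventually (gt_mem_nhds (half_pos hη)))).exists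
  have hsmall : ∀ᶠ n in atTop, T * ∫ ω, |D n ω| ∂μ < η / 2 := by
    have := hlim.const_mul T
    rw [mul_zero] at this
    exact this.eventually (gt_mem_nhds (half_pos hη))
  filter_upwards [hmom, hDC, hsmall] with n h1 h2 h3
  obtain ⟨hi, hle⟩ := integrable_rpow_and_integral_le μ (hX n) hM h1
  have hDi : Integrable (fun ω => |D n ω|) μ :=
    (integrable_const C).mono' (hD n).abs.aestronglyMeasurable
      (Eventually.of_forall fun ω => by simpa using h2 ω)
  rw [Real.dist_eq, sub_zero, abs_of_nonneg
    (integral_nonneg fun ω => mul_nonneg (sq_nonneg _) (abs_nonneg _))]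
  have hb : ∫ ω, X n ω ^ 2 * |D n ω| ∂μ
      ≤ ∫ ω, (T * |D n ω| + C * (|X n ω| ^ (2 + 2 * ν) / T ^ ν)) ∂μ := by
    refine integral_mono_of_nonneg
      (Eventually.of_forall fun ω => mul_nonneg (sq_nonneg _) (abs_nonneg _))
      ((hDi.const_mul T).add ((hi.div_const _).const_mul C)) (Eventually.of_forall fun ω => ?_)
    have e0 : 0 ≤ |X n ω| ^ (2 + 2 * ν) / T ^ ν := by positivity
    have e1 := abs_nonneg (D n ω)
    rcases le_or_gt (X n ω ^ 2) T with hlt | hlt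
    · have : X n ω ^ 2 * |D n ω| ≤ T * |D n ω| := by gcongr
      have := mul_nonneg hC e0
      simp only
      linarith
    · have e2 := sq_le_rpow_div_of_lt hν hT hlt
      have : X n ω ^ 2 * |D n ω| ≤ (|X n ω| ^ (2 + 2 * ν) / T ^ ν) * C :=
        mul_le_mul e2 (h2 ω) e1 e0
      have := mul_nonneg hT.le e1
      simp only
      linarith
  rw [integral_add (hDi.const_mul T) ((hi.div_const _).const_mul C), integral_const_mul,
    integral_const_mul, integral_div] at hb
  have : C * ((∫ ω, |X n ω| ^ (2 + 2 * ν) ∂μ) / T ^ ν) ≤ C * (M / T ^ ν) := by gcongr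
  linarith

/-- Discretization error of `y ≥ 0` by its level-set indicators on the grid `k/N`, `k ≤ N²`. -/
lemma abs_sub_grid_sum_le {N : ℕ} (hN : 0 < N) {y : ℝ} (hy : 0 ≤ y) :
    |y - (N : ℝ)⁻¹ * ∑ k ∈ Finset.Icc 1 (N ^ 2), (if (k : ℝ) / N ≤ y then (1 : ℝ) else 0)|
      ≤ (N : ℝ)⁻¹ + (if (N : ℝ) < y then y else 0) := by
  have hN' : (0 : ℝ) < N := by exact_mod_cast hN
  rw [Finset.sum_boole]
  split_ifs with hlt
  · have : Finset.filter (fun k : ℕ => (k : ℝ) / N ≤ y) (Finset.Icc 1 (N ^ 2))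
        = Finset.Icc 1 (N ^ 2) := by
      refine Finset.filter_true_of_mem fun k hk => ?_
      have : (k : ℝ) ≤ (N : ℝ) ^ 2 := by exact_mod_cast (Finset.mem_Icc.1 hk).2
      rw [div_le_iff₀ hN']
      nlinarith
    rw [this, Nat.card_Icc, Nat.add_sub_cancel]
    have e : (N : ℝ)⁻¹ * ((N ^ 2 : ℕ) : ℝ) = N := by push_cast; field_simp
    have := inv_pos.2 hN'
    rw [e, abs_le]
    constructor <;> linarith
  · have : Finset.filter (fun k : ℕ => (k : ℝ) / N ≤ y) (Finset.Icc 1 (N ^ 2))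
        = Finset.Icc 1 ⌊N * y⌋₊ := by
      ext k
      simp only [Finset.mem_filter, Finset.mem_Icc]
      rw [Nat.le_floor_iff (by positivity), div_le_iff₀ hN', mul_comm y]
      refine ⟨fun hk => ⟨hk.1.1, hk.2⟩, fun hk => ⟨⟨hk.1, ?_⟩, hk.2⟩⟩
      have : (k : ℝ) ≤ (N : ℝ) ^ 2 := by nlinarith [hk.2]
      exact_mod_cast this
    rw [this, Nat.card_Icc, Nat.add_sub_cancel, add_zero]
    have e1 := Nat.floor_le (mul_nonneg hN'.le hy)
    have e2 := Nat.lt_floor_add_one ((N : ℝ) * y)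
    have e3 : y - (N : ℝ)⁻¹ * ⌊(N : ℝ) * y⌋₊ = (N : ℝ)⁻¹ * (N * y - ⌊(N : ℝ) * y⌋₊) := by
      field_simp
    rw [e3, abs_of_nonneg (mul_nonneg (inv_pos.2 hN').le (by linarith))]
    exact mul_le_of_le_one_right (inv_pos.2 hN').le (by linarith)

end Moments

section LawOfLargeNumbers

variable {Ω : Type*} [MeasurableSpace Ω] (μ : Measure Ω) [IsProbabilityMeasure μ]
  {ε : ℕ → ℕ → Ω → ℝ}

/-- Nonasymptotic weak law of large numbers for squared innovations. -/
lemma integral_abs_average_centered_sq_le (hε_meas : ∀ n t, Measurable (ε n t))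
    (hα : Summable (alphaMix μ ε)) {ν M C : ℝ} (hν : 0 < ν) (hM : 0 ≤ M) (hC : 0 ≤ C)
    {n N : ℕ} (hn : 0 < n) (hN : 0 < N)
    (hmom : ∀ t : ℕ, 1 ≤ t → t ≤ n →
      ∫⁻ ω, ENNReal.ofReal (|ε n t ω| ^ (2 + 2 * ν)) ∂μ ≤ ENNReal.ofReal M)
    {J : Finset ℕ} (hJ : J ⊆ Finset.Icc 1 n) {d : ℕ → ℝ} (hd : ∀ t ∈ J, |d t| ≤ C) :
    ∫ ω, |(n : ℝ)⁻¹ * ∑ t ∈ J, d t * (ε n t ω ^ 2 - ∫ ω', ε n t ω' ^ 2 ∂μ)| ∂μ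
      ≤ 2 * C * ((N : ℝ)⁻¹ + M / (N : ℝ) ^ ν)
        + N * √(2 * C * (C / n) * ∑' k, lagMix μ ε 0 k) := by
  have hn' : (0 : ℝ) < n := by exact_mod_cast hn
  have hN' : (0 : ℝ) < N := by exact_mod_cast hN
  have hmo : ∀ t ∈ J, Integrable (fun ω => |ε n t ω| ^ (2 + 2 * ν)) μ ∧
      ∫ ω, |ε n t ω| ^ (2 + 2 * ν) ∂μ ≤ M := fun t ht =>
    integrable_rpow_and_integral_le μ (hε_meas n t) hM
      (hmom t (Finset.mem_Icc.1 (hJ ht)).1 (Finset.mem_Icc.1 (hJ ht)).2)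
  have hsq : ∀ t ∈ J, Integrable (fun ω => ε n t ω ^ 2) μ := fun t ht =>
    integrable_sq_of_rpow μ (hε_meas n t) hν (hmo t ht).1
  set A : ℕ → ℕ → Set Ω := fun k t => {ω | (k : ℝ) / N ≤ ε n t ω ^ 2} with hAdef
  have hAm' : ∀ (m : MeasurableSpace Ω) k t, Measurable[m] (ε n t) → MeasurableSet[m] (A k t) :=
    fun m k t hm => measurableSet_le measurable_const (hm.pow_const 2)
  have hAm : ∀ k t, MeasurableSet (A k t) := fun k t => hAm' _ k t (hε_meas n t)
  set U : ℕ → Ω → ℝ := fun t ω => (N : ℝ)⁻¹ * ∑ k ∈ Finset.Icc 1 (N ^ 2),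
    (A k t).indicator (fun _ => (1 : ℝ)) ω with hUdef
  have hAi : ∀ k t, Integrable ((A k t).indicator (fun _ => (1 : ℝ))) μ := fun k t =>
    (integrable_const 1).indicator (hAm k t)
  have hUi : ∀ t, Integrable (U t) μ := fun t =>
    (integrable_finsetSum _ fun k _ => hAi k t).const_mul _
  have hUint : ∀ t, ∫ ω, U t ω ∂μ
      = (N : ℝ)⁻¹ * ∑ k ∈ Finset.Icc 1 (N ^ 2), μ.real (A k t) := by
    intro t
    simp only [hUdef]
    rw [integral_const_mul, integral_finsetSum _ fun k _ => hAi k t]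
    simp [integral_indicator_const _ (hAm _ t)]
  have herr : ∀ t ∈ J, ∫ ω, |ε n t ω ^ 2 - U t ω| ∂μ ≤ (N : ℝ)⁻¹ + M / (N : ℝ) ^ ν := by
    intro t ht
    have hle : ∫ ω, |ε n t ω ^ 2 - U t ω| ∂μ
        ≤ ∫ ω, ((N : ℝ)⁻¹ + |ε n t ω| ^ (2 + 2 * ν) / (N : ℝ) ^ ν) ∂μ := by
      refine integral_mono_of_nonneg (Eventually.of_forall fun ω => abs_nonneg _)
        ((integrable_const _).add ((hmo t ht).1.div_const _)) (Eventually.of_forall fun ω => ?_)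
      have h1 := abs_sub_grid_sum_le hN (sq_nonneg (ε n t ω))
      have h2 : (if (N : ℝ) < ε n t ω ^ 2 then ε n t ω ^ 2 else 0)
          ≤ |ε n t ω| ^ (2 + 2 * ν) / (N : ℝ) ^ ν := by
        split_ifs with hlt
        · exact sq_le_rpow_div_of_lt hν hN' hlt
        · positivity
      have h3 : U t ω = (N : ℝ)⁻¹ * ∑ k ∈ Finset.Icc 1 (N ^ 2),
          (if (k : ℝ) / N ≤ ε n t ω ^ 2 then (1 : ℝ) else 0) := by
        simp [hUdef, hAdef, indicator]
      simp only
      rw [h3]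
      linarith
    refine hle.trans ?_
    rw [integral_add (integrable_const _) ((hmo t ht).1.div_const _), integral_div]
    simp only [integral_const, probReal_univ, one_smul]
    gcongr
    exact (hmo t ht).2
  have hdev : ∀ k, ∫ ω, |∑ t ∈ J, (n : ℝ)⁻¹ * d t *
      ((A k t).indicator (fun _ => (1 : ℝ)) ω - μ.real (A k t))| ∂μ
      ≤ √(2 * C * (C / n) * ∑' k, lagMix μ ε 0 k) := by
    intro k
    have hw : ∀ t ∈ J, |(n : ℝ)⁻¹ * d t| ≤ C / n := by
      intro t ht
      rw [abs_mul, abs_of_pos (inv_pos.2 hn'), div_eq_inv_mul]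
      gcongr
      exact hd t ht
    refine integral_abs_sum_centered_indicator_le μ (fun t _ => hAm k t) (lagMix_nonneg μ ε 0)
      (summable_lagMix μ ε hα 0) (fun i _ j _ hij => abs_cov_le_lagMix μ ε hij
        (hAm' _ k i (measurable_eps_pastField ε le_rfl))
        (hAm' _ k j (measurable_eps_futureField ε le_rfl))) (by positivity) hw ?_
    refine (Finset.sum_le_card_nsmul _ _ _ hw).trans ?_
    have hcard : (J.card : ℝ) ≤ n := by
      have := Finset.card_le_card hJ
      rw [Nat.card_Icc, Nat.add_sub_cancel] at this
      exact_mod_cast this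
    rw [nsmul_eq_mul]
    calc (J.card : ℝ) * (C / n) ≤ n * (C / n) := by gcongr
      _ = C := mul_div_cancel₀ C hn'.ne'
  have hsplit : ∀ ω, |(n : ℝ)⁻¹ * ∑ t ∈ J, d t * (ε n t ω ^ 2 - ∫ ω', ε n t ω' ^ 2 ∂μ)|
      ≤ (∑ t ∈ J, C / n * (|ε n t ω ^ 2 - U t ω| + ((N : ℝ)⁻¹ + M / (N : ℝ) ^ ν)))
        + (N : ℝ)⁻¹ * ∑ k ∈ Finset.Icc 1 (N ^ 2), |∑ t ∈ J, (n : ℝ)⁻¹ * d t *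
          ((A k t).indicator (fun _ => (1 : ℝ)) ω - μ.real (A k t))| := by
    intro ω
    have e1 : (n : ℝ)⁻¹ * ∑ t ∈ J, d t * (ε n t ω ^ 2 - ∫ ω', ε n t ω' ^ 2 ∂μ)
        = (∑ t ∈ J, (n : ℝ)⁻¹ * d t * ((ε n t ω ^ 2 - U t ω)
            - ∫ ω', (ε n t ω' ^ 2 - U t ω') ∂μ))
          + (N : ℝ)⁻¹ * ∑ k ∈ Finset.Icc 1 (N ^ 2), ∑ t ∈ J, (n : ℝ)⁻¹ * d t *
          ((A k t).indicator (fun _ => (1 : ℝ)) ω - μ.real (A k t)) := by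
      rw [Finset.sum_comm, Finset.mul_sum, Finset.mul_sum, ← Finset.sum_add_distrib]
      refine Finset.sum_congr rfl fun t ht => ?_
      rw [integral_sub (hsq t ht) (hUi t), hUint t, ← Finset.mul_sum, Finset.sum_sub_distrib]
      simp only [hUdef]
      ring
    rw [e1]
    refine (abs_add_le _ _).trans (add_le_add ?_ ?_)
    · refine (Finset.abs_sum_le_sum_abs _ _).trans (Finset.sum_le_sum fun t ht => ?_)
      rw [abs_mul, abs_mul, abs_of_pos (inv_pos.2 hn'), div_eq_inv_mul]
      have e2 : |(ε n t ω ^ 2 - U t ω) - ∫ ω', (ε n t ω' ^ 2 - U t ω') ∂μ|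
          ≤ |ε n t ω ^ 2 - U t ω| + ((N : ℝ)⁻¹ + M / (N : ℝ) ^ ν) :=
        (abs_sub _ _).trans (by
          gcongr
          exact abs_integral_le_integral_abs.trans (herr t ht))
      gcongr
      exact hd t ht
    · rw [abs_mul, abs_of_pos (inv_pos.2 hN')]
      gcongr
      exact Finset.abs_sum_le_sum_abs _ _
  have hi1 : ∀ t ∈ J, Integrable (fun ω => C / n * (|ε n t ω ^ 2 - U t ω|
      + ((N : ℝ)⁻¹ + M / (N : ℝ) ^ ν))) μ := fun t ht =>
    ((((hsq t ht).sub (hUi t)).abs).add (integrable_const _)).const_mul _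
  have hi2 : ∀ k ∈ Finset.Icc 1 (N ^ 2), Integrable (fun ω => |∑ t ∈ J, (n : ℝ)⁻¹ * d t *
      ((A k t).indicator (fun _ => (1 : ℝ)) ω - μ.real (A k t))|) μ := fun k _ =>
    (integrable_finsetSum _ fun t _ =>
      ((hAi k t).sub (integrable_const _)).const_mul _).abs
  refine (integral_mono_of_nonneg (Eventually.of_forall fun ω => abs_nonneg _)
    ((integrable_finsetSum _ hi1).add ((integrable_finsetSum _ hi2).const_mul _))
    (Eventually.of_forall hsplit)).trans ?_
  simp only [Pi.add_apply]
  rw [integral_add (integrable_finsetSum _ hi1) ((integrable_finsetSum _ hi2).const_mul _),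
    integral_finsetSum _ hi1, integral_const_mul, integral_finsetSum _ hi2]
  have hE : 0 ≤ (N : ℝ)⁻¹ + M / (N : ℝ) ^ ν := by positivity
  refine add_le_add ?_ ?_
  · have h1 : ∀ t ∈ J, ∫ ω, C / n * (|ε n t ω ^ 2 - U t ω| + ((N : ℝ)⁻¹ + M / (N : ℝ) ^ ν)) ∂μ
        ≤ C / n * (2 * ((N : ℝ)⁻¹ + M / (N : ℝ) ^ ν)) := by
      intro t ht
      have habs : Integrable (fun ω => |ε n t ω ^ 2 - U t ω|) μ := ((hsq t ht).sub (hUi t)).abs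
      rw [integral_const_mul, integral_add habs (integrable_const _)]
      simp only [integral_const, probReal_univ, one_smul]
      gcongr
      linarith [herr t ht]
    refine (Finset.sum_le_card_nsmul _ _ _ h1).trans ?_
    have hcard : (J.card : ℝ) ≤ n := by
      have := Finset.card_le_card hJ
      rw [Nat.card_Icc, Nat.add_sub_cancel] at this
      exact_mod_cast this
    rw [nsmul_eq_mul]
    calc (J.card : ℝ) * (C / n * (2 * ((N : ℝ)⁻¹ + M / (N : ℝ) ^ ν)))
        ≤ n * (C / n * (2 * ((N : ℝ)⁻¹ + M / (N : ℝ) ^ ν))) := by gcongr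
      _ = 2 * C * ((N : ℝ)⁻¹ + M / (N : ℝ) ^ ν) := by field_simp
  · refine (mul_le_mul_of_nonneg_left (Finset.sum_le_card_nsmul _ _ _ fun k _ => hdev k)
      (inv_pos.2 hN').le).trans (le_of_eq ?_)
    rw [Nat.card_Icc, Nat.add_sub_cancel, nsmul_eq_mul]
    push_cast
    field_simp

/-- Weak law of large numbers for weighted averages of squared innovations. -/
lemma tendsto_integral_abs_average_centered_sq (hε_meas : ∀ n t, Measurable (ε n t))
    (hα : Summable (alphaMix μ ε)) {ν M C : ℝ} (hν : 0 < ν) (hM : 0 ≤ M) (hC : 0 ≤ C)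
    (hmom : ∀ n t : ℕ, 1 ≤ t → t ≤ n →
      ∫⁻ ω, ENNReal.ofReal (|ε n t ω| ^ (2 + 2 * ν)) ∂μ ≤ ENNReal.ofReal M)
    {J : ℕ → Finset ℕ} (hJ : ∀ n, J n ⊆ Finset.Icc 1 n) {d : ℕ → ℕ → ℝ}
    (hd : ∀ n, ∀ t ∈ J n, |d n t| ≤ C) :
    Tendsto (fun n : ℕ => ∫ ω, |(n : ℝ)⁻¹ * ∑ t ∈ J n,
      d n t * (ε n t ω ^ 2 - ∫ ω', ε n t ω' ^ 2 ∂μ)| ∂μ) atTop (nhds 0) := by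
  rw [Metric.tendsto_nhds]
  intro η hη
  obtain ⟨N, hN, hNη⟩ : ∃ N : ℕ, 0 < N ∧ 2 * C * ((N : ℝ)⁻¹ + M / (N : ℝ) ^ ν) < η / 2 := by
    have e1 : Tendsto (fun T : ℝ => 2 * C * (T⁻¹ + M / T ^ ν)) atTop (nhds (2 * C * (0 + 0))) :=
      (tendsto_inv_atTop_zero.add ((tendsto_rpow_atTop hν).const_div_atTop M)).const_mul _
    rw [add_zero, mul_zero] at e1
    have e2 := (e1.comp (tendsto_natCast_atTop_atTop (R := ℝ))).eventually
      (gt_mem_nhds (half_pos hη))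
    exact ((eventually_gt_atTop 0).and e2).exists
  have hlim : Tendsto (fun n : ℕ => N * √(2 * C * (C / n) * ∑' k, lagMix μ ε 0 k)) atTop
      (nhds 0) := by
    have e1 := ((((tendsto_const_div_atTop_nhds_zero_nat C).const_mul (2 * C)).mul_const
      (∑' k, lagMix μ ε 0 k)).sqrt).const_mul (N : ℝ)
    simpa using e1
  filter_upwards [hlim.eventually (gt_mem_nhds (half_pos hη)), eventually_gt_atTop 0] with n h1 hn
  rw [Real.dist_eq, sub_zero, abs_of_nonneg (integral_nonneg fun ω => abs_nonneg _)]
  have := integral_abs_average_centered_sq_le μ hε_meas hα hν hM hC hn hN (hmom n) (hJ n) (hd n)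
  linarith

end LawOfLargeNumbers

section Main

variable {Ω : Type*} [MeasurableSpace Ω] (μ : Measure Ω)
  {v : ℝ → ℝ} {ε : ℕ → ℕ → Ω → ℝ}

lemma integral_eps_sq_eq {n t : ℕ} {p : ℝ} (hε : Measurable (ε n t))
    (hv : 0 < v ((t : ℝ) / n)) (hp : 0 < p)
    (hprob : (μ {ω | aproc v ε n t ω * aproc v ε n t ω = 1}).toReal = p)
    (hident : ∫ ω, (ε n t ω) ^ 2 ∂(μ[|{ω | aproc v ε n t ω = 1}]) = 1) :
    ∫ ω, ε n t ω ^ 2 ∂μ = p := by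
  simp only [aproc_mul_self] at hprob
  set S := {ω | aproc v ε n t ω = 1} with hS
  have hSm : MeasurableSet S := measurable_aproc ε v hε (measurableSet_singleton 1)
  have hzero : ∀ ω, ω ∉ S → ε n t ω ^ 2 = 0 := by
    intro ω hω
    by_contra hne
    apply hω
    have : ε n t ω ≠ 0 := fun h0 => hne (by simp [h0])
    simp [hS, aproc, rproc, hv.ne', this]
  rw [ProbabilityTheory.cond, integral_smul_measure, ENNReal.toReal_inv, hprob,
    setIntegral_eq_integral_of_forall_compl_eq_zero hzero, smul_eq_mul] at hident
  field_simp at hident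
  exact hident

variable [IsProbabilityMeasure μ] {K : ℝ → ℝ} {b : ℕ → ℝ}

lemma ceil_mul_mem_Icc {n : ℕ} (hn : 0 < n) {s : ℝ} (hs : s ∈ Ioo (0 : ℝ) 1) :
    1 ≤ ⌈(n : ℝ) * s⌉₊ ∧ ⌈(n : ℝ) * s⌉₊ ≤ n := by
  have hn' : (0 : ℝ) < n := by exact_mod_cast hn
  exact ⟨Nat.one_le_ceil_iff.2 (mul_pos hn' hs.1),
    Nat.ceil_le.2 (mul_le_of_le_one_right hn'.le hs.2.le)⟩

lemma natCast_div_mem_Ioc {n t : ℕ} (h1 : 1 ≤ t) (h2 : t ≤ n) :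
    (t : ℝ) / n ∈ Ioc (0 : ℝ) 1 := by
  have ht : (0 : ℝ) < t := by exact_mod_cast h1
  have htn : (t : ℝ) ≤ n := by exact_mod_cast h2
  exact ⟨div_pos ht (ht.trans_le htn), div_le_one_of_le₀ htn (ht.le.trans htn)⟩

/-- Replacing the estimated by the true conditional probability is asymptotically negligible
at interior points of continuity. -/
lemma tendsto_integral_sq_mul_abs_ratio_sub (hε_meas : ∀ n t, Measurable (ε n t))
    (hα : Summable (alphaMix μ ε)) {ν M c R : ℝ} (hν : 0 < ν) (hM : 0 ≤ M) (hc : 0 < c)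
    (hmom : ∀ n t : ℕ, 1 ≤ t → t ≤ n →
      ∫⁻ ω, ENNReal.ofReal (|ε n t ω| ^ (2 + 2 * ν)) ∂μ ≤ ENNReal.ofReal M)
    (hK_cont : Continuous K) (hK_supp : HasCompactSupport K)
    (hK_nonneg : ∀ z, 0 ≤ K z) (hK_le : ∀ z, K z ≤ R)
    (hK_int : ∫ z : ℝ, K z = 1) (hb_pos : ∀ n, 0 < b n) (hb0 : Tendsto b atTop (nhds 0))
    (hB : Tendsto (fun n : ℕ => (n : ℝ) * b n) atTop atTop) {s : ℝ} (hs : s ∈ Ioo (0 : ℝ) 1)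
    {p q : ℝ → ℝ} (hp : ContinuousAt p s) (hq : ContinuousAt q s)
    (hpc : ∀ u ∈ Ioc (0 : ℝ) 1, c ≤ p u) (hq1 : ∀ u ∈ Ioc (0 : ℝ) 1, |q u| ≤ 1) {h : ℕ}
    (hprob0 : ∀ n t : ℕ, 0 < t → t ≤ n →
      (μ {ω | aproc v ε n t ω * aproc v ε n (t - 0) ω = 1}).toReal = p ((t : ℝ) / n))
    (hprob : ∀ n t : ℕ, h < t → t ≤ n →
      (μ {ω | aproc v ε n t ω * aproc v ε n (t - h) ω = 1}).toReal = q ((t : ℝ) / n)) :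
    Tendsto (fun n : ℕ => ∫ ω, ε n ⌈(n : ℝ) * s⌉₊ ω ^ 2 *
      |phat2 v ε K b n h ⌈(n : ℝ) * s⌉₊ ω / phat v ε K b n ⌈(n : ℝ) * s⌉₊ ω
        - q (((⌈(n : ℝ) * s⌉₊ : ℕ) : ℝ) / n) / p (((⌈(n : ℝ) * s⌉₊ : ℕ) : ℝ) / n)| ∂μ)
      atTop (nhds 0) := by
  have hP := tendsto_integral_abs_phat2_sub μ hε_meas hα hK_cont hK_supp hK_nonneg hK_le hK_int
    hb_pos hb0 hB hs hp hprob0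
  have hQ := tendsto_integral_abs_phat2_sub μ hε_meas hα hK_cont hK_supp hK_nonneg hK_le hK_int
    hb_pos hb0 hB hs hq hprob
  refine tendsto_integral_sq_mul_abs μ (C := 1 + c⁻¹)
    (X := fun n => ε n ⌈(n : ℝ) * s⌉₊)
    (D := fun n ω => phat2 v ε K b n h ⌈(n : ℝ) * s⌉₊ ω / phat v ε K b n ⌈(n : ℝ) * s⌉₊ ω
        - q (((⌈(n : ℝ) * s⌉₊ : ℕ) : ℝ) / n) / p (((⌈(n : ℝ) * s⌉₊ : ℕ) : ℝ) / n))
    hν hM (by positivity) (fun n => hε_meas _ _)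
    (fun n => ((measurable_phat2 hε_meas _ _ _).div (measurable_phat hε_meas _ _)).sub_const _)
    ?_ ?_ ?_
  · filter_upwards [eventually_gt_atTop 0] with n hn
    exact hmom n _ (ceil_mul_mem_Icc hn hs).1 (ceil_mul_mem_Icc hn hs).2
  · filter_upwards [eventually_gt_atTop 0] with n hn ω
    have hu := natCast_div_mem_Ioc (ceil_mul_mem_Icc hn hs).1 (ceil_mul_mem_Icc hn hs).2
    exact abs_ratio_sub_le hK_nonneg hc (hpc _ hu) (hq1 _ hu) _ _ _ _
  · have hlim := (hP.add hQ).const_mul c⁻¹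
    rw [add_zero, mul_zero] at hlim
    refine squeeze_zero' (Eventually.of_forall fun n => integral_nonneg fun ω => abs_nonneg _) ?_
      hlim
    filter_upwards [eventually_gt_atTop 0] with n hn
    have hu := natCast_div_mem_Ioc (ceil_mul_mem_Icc hn hs).1 (ceil_mul_mem_Icc hn hs).2
    have hinteg : ∀ k : ℕ, ∀ a : ℝ,
        Integrable (fun ω => |phat2 v ε K b n k ⌈(n : ℝ) * s⌉₊ ω - a|) μ := by
      intro k a
      refine (integrable_const (1 + |a|)).mono'
        ((measurable_phat2 hε_meas _ _ _).sub_const _).abs.aestronglyMeasurable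
        (Eventually.of_forall fun ω => ?_)
      rw [Real.norm_eq_abs, abs_abs]
      refine (abs_sub _ _).trans ?_
      gcongr
      rw [abs_of_nonneg (phat2_nonneg hK_nonneg _ _ _ _)]
      refine (phat2_le_phat hK_nonneg _ _ _ _).trans (le_trans ?_
        (sum_wgt_le_one (K := K) (b := b) n ⌈(n : ℝ) * s⌉₊))
      exact Finset.sum_le_sum fun j _ =>
        mul_le_of_le_one_right (wgt_nonneg hK_nonneg _ _ _) (aproc_le_one ε v _ _ _)
    rw [← integral_add (hinteg _ _) (hinteg _ _), ← integral_const_mul]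
    refine integral_mono_of_nonneg (Eventually.of_forall fun ω => abs_nonneg _)
      (((hinteg _ _).add (hinteg _ _)).const_mul _) (Eventually.of_forall fun ω => ?_)
    have := abs_div_sub_div_le (q := q (((⌈(n : ℝ) * s⌉₊ : ℕ) : ℝ) / n)) hc (hpc _ hu)
      (phat2_nonneg (v := v) (ε := ε) (b := b) hK_nonneg n h ⌈(n : ℝ) * s⌉₊ ω)
      (phat2_le_phat hK_nonneg _ _ _ _)
    simpa only [phat_eq_phat2] using this

lemma sum_Icc_one_ite_lt (n h : ℕ) (F : ℕ → ℝ) :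
    (∑ t ∈ Finset.Icc 1 n, if h < t then F t else 0) = ∑ t ∈ Finset.Icc (h + 1) n, F t := by
  rw [← Finset.sum_filter]
  congr 1
  ext t
  simp only [Finset.mem_Icc, Finset.mem_filter]
  omega

lemma eventually_lt_ceil_mul (h : ℕ) {s : ℝ} (hs : 0 < s) :
    ∀ᶠ n : ℕ in atTop, h < ⌈(n : ℝ) * s⌉₊ := by
  filter_upwards [((tendsto_natCast_atTop_atTop (R := ℝ)).atTop_mul_const hs).eventually_gt_atTop
    (h : ℝ)] with n hn
  exact Nat.lt_ceil.2 hn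

/-- Riemann sums of a bounded almost everywhere continuous function, skipping the first `h`
summands, converge to the integral. -/
lemma tendsto_average_comp_div (h : ℕ) {f : ℝ → ℝ} {C : ℝ}
    (hC : ∀ u ∈ Ioc (0 : ℝ) 1, |f u| ≤ C)
    (hf : ∀ᵐ s ∂volume.restrict (Ioc (0 : ℝ) 1), ContinuousAt f s) :
    Tendsto (fun n : ℕ => (n : ℝ)⁻¹ * ∑ t ∈ Finset.Icc (h + 1) n, f ((t : ℝ) / n)) atTop
      (nhds (∫ s in Ioc (0 : ℝ) 1, f s)) := by
  have hC0 : 0 ≤ C := (abs_nonneg _).trans (hC 1 ⟨one_pos, le_rfl⟩)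
  have := tendsto_average_of_ae_tendsto (f := f) (C := C)
    (F := fun n t => if h < t then f ((t : ℝ) / n) else 0) (fun n t h1 h2 => ?_) ?_
  · simpa only [sum_Icc_one_ite_lt] using this
  · split_ifs
    · exact hC _ (natCast_div_mem_Ioc h1 h2)
    · simpa using hC0
  · filter_upwards [hf, ae_restrict_mem measurableSet_Ioc] with s hs hs01
    refine (hs.tendsto.comp (tendsto_ceil_mul_div hs01.1)).congr' ?_
    filter_upwards [eventually_lt_ceil_mul h hs01.1] with n hn
    simp [hn]

/-- `L¹`-convergence implies convergence in probability. -/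
lemma tendstoInMeasure_of_tendsto_integral_abs {X : ℕ → Ω → ℝ} {a : ℝ}
    (hX : ∀ᶠ n in atTop, Integrable (X n) μ)
    (hlim : Tendsto (fun n => ∫ ω, |X n ω - a| ∂μ) atTop (nhds 0)) :
    TendstoInMeasure μ X atTop (fun _ => a) := by
  rw [tendstoInMeasure_iff_measureReal_dist]
  intro η hη
  have h0 := hlim.const_mul η⁻¹
  rw [mul_zero] at h0
  refine squeeze_zero' (Eventually.of_forall fun n => measureReal_nonneg) ?_ h0
  filter_upwards [hX] with n hn
  have := mul_meas_ge_le_integral_of_nonneg (μ := μ) (f := fun ω => |X n ω - a|)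
    (Eventually.of_forall fun ω => abs_nonneg _) (hn.sub (integrable_const a)).abs η
  rw [le_inv_mul_iff₀ hη]
  exact this

end Main

/-- Under the non-stationary zero-returns model with mixing and the
kernel/bandwidth assumption, for each `h = 1,…,m` the statistic
`γ̂_{ar²}(h) = (n-h)⁻¹ Σ_{t=1+h}^n r_t² p̂_{t,t-h}/p̂_t` converges in probability to
`∫₀¹ v(s)² g_h(s) ds`. -/
theorem stmt8 {Ω : Type*} [MeasurableSpace Ω] (μ : Measure Ω) [IsProbabilityMeasure μ]
    (m : ℕ) (v : ℝ → ℝ) (g : ℕ → ℝ → ℝ) (c : ℝ) (ε : ℕ → ℕ → Ω → ℝ) (ν μ2 : ℝ)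
    (K : ℝ → ℝ) (R : ℝ) (b : ℕ → ℝ)
    -- deterministic variance function `v`
    (hc : 0 < c)
    (hv_pos : ∀ s ∈ Set.Ioc (0 : ℝ) 1, 0 < v s)
    (hv_bdd : ∃ M, ∀ s ∈ Set.Ioc (0 : ℝ) 1, |v s| ≤ M)
    (hv_lip : PiecewiseLipschitzOn01 v)
    (hv_ext : ∃ L, Tendsto v (nhdsWithin 0 (Set.Ioi 0)) (nhds L) ∧ ∀ u ≤ (0 : ℝ), v u = L)
    -- deterministic zero-returns probability functions `g_h`, `h = 0,…,m`
    (hg_bnd : ∀ h ≤ m, ∀ s ∈ Set.Ioc (0 : ℝ) 1, c < g h s ∧ g h s ≤ 1)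
    (hg_lip : ∀ h ≤ m, PiecewiseLipschitzOn01 (g h))
    (hg_ext : ∀ h ≤ m, ∃ L, Tendsto (g h) (nhdsWithin 0 (Set.Ioi 0)) (nhds L) ∧
      ∀ u ≤ (0 : ℝ), g h u = L)
    -- the innovations are measurable and `P(a_t a_{t-h} = 1) = g_h(t/n)`
    (hε_meas : ∀ n t, Measurable (ε n t))
    (hprob : ∀ h ≤ m, ∀ n t : ℕ, h < t → t ≤ n →
      (μ {ω | aproc v ε n t ω * aproc v ε n (t - h) ω = 1}).toReal = g h ((t : ℝ) / n))
    -- identifiability: `E(ε_t | a_t = 1) = 0` and `E(ε_t² | a_t = 1) = 1`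
    (hident1 : ∀ n t : ℕ, 1 ≤ t → t ≤ n →
      ∫ ω, ε n t ω ∂(μ[|{ω | aproc v ε n t ω = 1}]) = 0)
    (hident2 : ∀ n t : ℕ, 1 ≤ t → t ≤ n →
      ∫ ω, (ε n t ω) ^ 2 ∂(μ[|{ω | aproc v ε n t ω = 1}]) = 1)
    -- conditional strict stationarity
    (hstat : ∀ n k t h : ℕ,
      (μ[|{ω | (∀ i ≤ k, aproc v ε n (t + i) ω = 1) ∧
          ∀ i ≤ k, aproc v ε n (t + h + i) ω = 1}]).map
        (fun ω => fun i : Fin (k + 1) => ε n (t + (i : ℕ)) ω)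
      = (μ[|{ω | (∀ i ≤ k, aproc v ε n (t + i) ω = 1) ∧
          ∀ i ≤ k, aproc v ε n (t + h + i) ω = 1}]).map
        (fun ω => fun i : Fin (k + 1) => ε n (t + h + (i : ℕ)) ω))
    -- strong mixing and moment conditions
    (hν : 0 < ν) (hμ2a : 1 ≤ μ2) (hμ2b : μ2 < 1 + ν) (hμ2c : 1 + ν < 2 * μ2)
    (hmix : Summable (fun h : ℕ => alphaMix μ ε h ^ (1 - 1 / (2 * μ2))))
    (hmom : ∃ M : ℝ, ∀ n t : ℕ, 1 ≤ t → t ≤ n →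
      ∫⁻ ω, ENNReal.ofReal (|ε n t ω| ^ (2 + 2 * ν)) ∂μ ≤ ENNReal.ofReal M)
    -- kernel and bandwidth assumption
    (hK_cont : Continuous K) (hK_supp : HasCompactSupport K)
    (hK_nonneg : ∀ z, 0 ≤ K z) (hK_le : ∀ z, K z ≤ R)
    (hK_int : ∫ z : ℝ, K z = 1)
    (hb_pos : ∀ n, 0 < b n)
    (hb0 : Tendsto b atTop (nhds 0))
    (hnb : Tendsto (fun n : ℕ => 1 / ((n : ℝ) * (b n) ^ 2)) atTop (nhds 0))
    :
    ∀ h : ℕ, 1 ≤ h → h ≤ m →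
      TendstoInMeasure μ (fun n : ℕ => gammaAr2 v ε K b n h) atTop
        (fun _ => ∫ s in Set.Ioc (0 : ℝ) 1, (v s) ^ 2 * g h s) := by
  intro h _ hhm
  obtain ⟨M₀, hM₀⟩ := hmom
  obtain ⟨V, hV⟩ := hv_bdd
  obtain ⟨M, hM, hmom⟩ : ∃ M : ℝ, 0 ≤ M ∧ ∀ n t : ℕ, 1 ≤ t → t ≤ n →
      ∫⁻ ω, ENNReal.ofReal (|ε n t ω| ^ (2 + 2 * ν)) ∂μ ≤ ENNReal.ofReal M :=
    ⟨max M₀ 0, le_max_right _ _, fun n t h1 h2 =>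
      (hM₀ n t h1 h2).trans (ENNReal.ofReal_le_ofReal (le_max_left _ _))⟩
  have hα := summable_alphaMix_of_rpow μ ε hμ2a hmix
  have hB := tendsto_nat_mul_bandwidth hb_pos hb0 hnb
  have hgc : ∀ u ∈ Ioc (0 : ℝ) 1, c ≤ g 0 u := fun u hu => (hg_bnd 0 (Nat.zero_le _) u hu).1.le
  have hgh : ∀ u ∈ Ioc (0 : ℝ) 1, |g h u| ≤ 1 := fun u hu => by
    rw [abs_of_pos (hc.trans (hg_bnd h hhm u hu).1)]
    exact (hg_bnd h hhm u hu).2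
  have hvV : ∀ u ∈ Ioc (0 : ℝ) 1, v u ^ 2 ≤ V ^ 2 := fun u hu =>
    sq_le_sq' (abs_le.1 (hV u hu)).1 (abs_le.1 (hV u hu)).2
  set G : ℝ → ℝ := fun u => g h u / g 0 u with hG
  have hGc : ∀ u ∈ Ioc (0 : ℝ) 1, |G u| ≤ c⁻¹ := fun u hu => by
    have hp0 : 0 < g 0 u := hc.trans_le (hgc u hu)
    rw [hG, abs_div, abs_of_pos hp0, div_eq_mul_inv]
    calc |g h u| * (g 0 u)⁻¹ ≤ 1 * c⁻¹ := by
          gcongr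
          exacts [hgh u hu, hgc u hu]
      _ = c⁻¹ := one_mul _
  have hsqi : ∀ n t : ℕ, 1 ≤ t → t ≤ n → Integrable (fun ω => ε n t ω ^ 2) μ ∧
      ∫ ω, ε n t ω ^ 2 ∂μ = g 0 ((t : ℝ) / n) := fun n t h1 h2 => by
    have hu := natCast_div_mem_Ioc h1 h2
    exact ⟨integrable_sq_of_rpow μ (hε_meas n t) hν
      (integrable_rpow_and_integral_le μ (hε_meas n t) hM (hmom n t h1 h2)).1,
      integral_eps_sq_eq μ (hε_meas n t) (hv_pos _ hu) (hc.trans_le (hgc _ hu))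
        (hprob 0 (Nat.zero_le _) n t h1 h2) (hident2 n t h1 h2)⟩
  set D : ℕ → ℕ → Ω → ℝ := fun n t ω =>
    phat2 v ε K b n h t ω / phat v ε K b n t ω - G ((t : ℝ) / n) with hD
  have hDm : ∀ n t, Measurable (D n t) := fun n t =>
    ((measurable_phat2 hε_meas n h t).div (measurable_phat hε_meas n t)).sub_const _
  have hDb : ∀ n t : ℕ, 1 ≤ t → t ≤ n → ∀ ω, |D n t ω| ≤ 1 + c⁻¹ := fun n t h1 h2 ω => by
    have hu := natCast_div_mem_Ioc h1 h2
    exact abs_ratio_sub_le hK_nonneg hc (hgc _ hu) (hgh _ hu) n h t ω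
  have hDle : ∀ n t : ℕ, 1 ≤ t → t ≤ n → ∀ ω,
      ε n t ω ^ 2 * |D n t ω| ≤ (1 + c⁻¹) * ε n t ω ^ 2 := fun n t h1 h2 ω => by
    rw [mul_comm]
    exact mul_le_mul_of_nonneg_right (hDb n t h1 h2 ω) (sq_nonneg _)
  have hDi : ∀ n t : ℕ, 1 ≤ t → t ≤ n → Integrable (fun ω => ε n t ω ^ 2 * |D n t ω|) μ :=
    fun n t h1 h2 => ((hsqi n t h1 h2).1.const_mul (1 + c⁻¹)).mono'
      (((hε_meas n t).pow_const 2).mul (hDm n t).abs).aestronglyMeasurable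
      (Eventually.of_forall fun ω => by
        rw [Real.norm_eq_abs, abs_of_nonneg (mul_nonneg (sq_nonneg _) (abs_nonneg _))]
        exact hDle n t h1 h2 ω)
  have hcont0 := (hg_lip 0 (Nat.zero_le _)).ae_continuousAt
  have hconth := (hg_lip h hhm).ae_continuousAt
  have hcontv := hv_lip.ae_continuousAt
  -- the error made by estimating the zero-return probabilities
  have hT1 : Tendsto (fun n : ℕ => (n : ℝ)⁻¹ * ∑ t ∈ Finset.Icc (h + 1) n,
      V ^ 2 * ∫ ω, ε n t ω ^ 2 * |D n t ω| ∂μ) atTop (nhds 0) := by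
    have := tendsto_average_of_ae_tendsto (C := V ^ 2 * (1 + c⁻¹)) (f := fun _ => 0)
      (F := fun n t => if h < t then V ^ 2 * ∫ ω, ε n t ω ^ 2 * |D n t ω| ∂μ else 0)
      (fun n t h1 h2 => ?_) ?_
    · simpa only [sum_Icc_one_ite_lt, integral_zero] using this
    · have hu := natCast_div_mem_Ioc h1 h2
      have hle : ∫ ω, ε n t ω ^ 2 * |D n t ω| ∂μ ≤ 1 + c⁻¹ := by
        refine (integral_mono (hDi n t h1 h2) ((hsqi n t h1 h2).1.const_mul _)
          (hDle n t h1 h2)).trans ?_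
        rw [integral_const_mul, (hsqi n t h1 h2).2]
        exact mul_le_of_le_one_right (by positivity) (hg_bnd 0 (Nat.zero_le _) _ hu).2
      have hnn : 0 ≤ ∫ ω, ε n t ω ^ 2 * |D n t ω| ∂μ :=
        integral_nonneg fun ω => mul_nonneg (sq_nonneg _) (abs_nonneg _)
      split_ifs
      · rw [abs_of_nonneg (by positivity)]
        gcongr
      · rw [abs_zero]
        positivity
    · filter_upwards [hcont0, hconth, ae_restrict_Ioc_mem_Ioo] with s h0 hh hs
      have := (tendsto_integral_sq_mul_abs_ratio_sub μ hε_meas hα hν hM hc hmom hK_cont hK_supp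
        hK_nonneg hK_le hK_int hb_pos hb0 hB hs h0 hh hgc hgh (hprob 0 (Nat.zero_le _))
        (hprob h hhm)).const_mul (V ^ 2)
      rw [mul_zero] at this
      refine this.congr' ?_
      filter_upwards [eventually_lt_ceil_mul h hs.1] with n hn
      simp only [hn, if_true, hD, hG]
  -- the law of large numbers for the squared innovations
  have hT2 := tendsto_integral_abs_average_centered_sq μ hε_meas hα hν hM
    (C := V ^ 2 * c⁻¹) (by positivity) hmom (J := fun n => Finset.Icc (h + 1) n)
    (d := fun n t => v ((t : ℝ) / n) ^ 2 * G ((t : ℝ) / n))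
    (fun n => Finset.Icc_subset_Icc_left (by omega)) (fun n t ht => by
      have hu := natCast_div_mem_Ioc (n := n) (t := t) (by grind) (Finset.mem_Icc.1 ht).2
      rw [abs_mul, abs_of_nonneg (sq_nonneg _)]
      exact mul_le_mul (hvV _ hu) (hGc _ hu) (abs_nonneg _) (sq_nonneg _))
  -- the Riemann sum
  have hT3 := tendsto_average_comp_div h (f := fun s => v s ^ 2 * g h s) (C := V ^ 2 * 1)
    (fun u hu => by
      rw [abs_mul, abs_of_nonneg (sq_nonneg _)]
      exact mul_le_mul (hvV u hu) (hgh u hu) (abs_nonneg _) (sq_nonneg _))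
    (by filter_upwards [hcontv, hconth] with s h1 h2 using (h1.pow 2).mul h2)
  set I := ∫ s in Ioc (0 : ℝ) 1, v s ^ 2 * g h s
  set Y : ℕ → Ω → ℝ := fun n ω => (n : ℝ)⁻¹ * ∑ t ∈ Finset.Icc (h + 1) n,
    rproc v ε n t ω ^ 2 * (phat2 v ε K b n h t ω / phat v ε K b n t ω) with hY
  have hIcc : ∀ {n t : ℕ}, t ∈ Finset.Icc (h + 1) n → 1 ≤ t ∧ t ≤ n := fun ht => by
    rw [Finset.mem_Icc] at ht
    omega
  set S : ℕ → Ω → ℝ := fun n ω => (n : ℝ)⁻¹ * ∑ t ∈ Finset.Icc (h + 1) n,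
    v ((t : ℝ) / n) ^ 2 * G ((t : ℝ) / n) * (ε n t ω ^ 2 - ∫ ω', ε n t ω' ^ 2 ∂μ) with hS
  set a : ℕ → ℝ := fun n => (n : ℝ)⁻¹ * ∑ t ∈ Finset.Icc (h + 1) n,
    v ((t : ℝ) / n) ^ 2 * g h ((t : ℝ) / n) with ha
  have hYeq : ∀ n ω, Y n ω = (n : ℝ)⁻¹ * ∑ t ∈ Finset.Icc (h + 1) n,
      v ((t : ℝ) / n) ^ 2 * (ε n t ω ^ 2 * D n t ω) + S n ω + a n := by
    intro n ω
    simp only [hY, hS, ha]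
    rw [← mul_add, ← mul_add, ← Finset.sum_add_distrib, ← Finset.sum_add_distrib]
    congr 1
    refine Finset.sum_congr rfl fun t ht => ?_
    have hp0 : g 0 ((t : ℝ) / n) ≠ 0 :=
      (hc.trans_le (hgc _ (natCast_div_mem_Ioc (hIcc ht).1 (hIcc ht).2))).ne'
    rw [(hsqi n t (hIcc ht).1 (hIcc ht).2).2]
    simp only [hD, hG, rproc]
    field_simp
    ring
  have hSi : ∀ n, Integrable (S n) μ := fun n =>
    (integrable_finsetSum _ fun t ht => (((hsqi n t (hIcc ht).1 (hIcc ht).2).1.sub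
      (integrable_const _)).const_mul _)).const_mul _
  have hDi' : ∀ n t : ℕ, 1 ≤ t → t ≤ n → Integrable (fun ω => ε n t ω ^ 2 * D n t ω) μ :=
    fun n t h1 h2 => (hDi n t h1 h2).mono
      (((hε_meas n t).pow_const 2).mul (hDm n t)).aestronglyMeasurable
      (Eventually.of_forall fun ω => by simp)
  have hYi : ∀ n, Integrable (Y n) μ := fun n => by
    refine Integrable.congr ?_ (Eventually.of_forall fun ω => (hYeq n ω).symm)
    exact (((integrable_finsetSum _ fun t ht =>
      (hDi' n t (hIcc ht).1 (hIcc ht).2).const_mul _).const_mul _).add (hSi n)).add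
      (integrable_const _)
  have hYle : ∀ n, ∫ ω, |Y n ω - I| ∂μ ≤ (n : ℝ)⁻¹ * ∑ t ∈ Finset.Icc (h + 1) n,
      V ^ 2 * ∫ ω, ε n t ω ^ 2 * |D n t ω| ∂μ + ∫ ω, |S n ω| ∂μ + |a n - I| := by
    intro n
    have hi1 : ∀ t ∈ Finset.Icc (h + 1) n,
        Integrable (fun ω => V ^ 2 * (ε n t ω ^ 2 * |D n t ω|)) μ := fun t ht =>
      (hDi n t (hIcc ht).1 (hIcc ht).2).const_mul _
    have hi1' := (integrable_finsetSum _ hi1).const_mul (n : ℝ)⁻¹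
    have hi2 : Integrable (fun ω => |S n ω|) μ := (hSi n).abs
    have hpt : ∀ ω, |Y n ω - I| ≤ (n : ℝ)⁻¹ * ∑ t ∈ Finset.Icc (h + 1) n,
        V ^ 2 * (ε n t ω ^ 2 * |D n t ω|) + |S n ω| + |a n - I| := by
      intro ω
      rw [hYeq n ω, add_sub_assoc]
      refine (abs_add_le _ _).trans (add_le_add_left ((abs_add_le _ _).trans
        (add_le_add_left ?_ _)) _)
      rw [abs_mul, abs_of_nonneg (inv_nonneg.2 (Nat.cast_nonneg n))]
      gcongr
      refine (Finset.abs_sum_le_sum_abs _ _).trans (Finset.sum_le_sum fun t ht => ?_)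
      rw [abs_mul, abs_mul, abs_of_nonneg (sq_nonneg _), abs_of_nonneg (sq_nonneg _)]
      refine mul_le_mul_of_nonneg_right ?_ (by positivity)
      exact hvV _ (natCast_div_mem_Ioc (hIcc ht).1 (hIcc ht).2)
    refine (integral_mono (((hYi n).sub (integrable_const I)).abs)
      ((hi1'.add hi2).add (integrable_const _)) hpt).trans (le_of_eq ?_)
    simp only [Pi.add_apply]
    have hi3 : Integrable (fun ω => (n : ℝ)⁻¹ * ∑ t ∈ Finset.Icc (h + 1) n,
        V ^ 2 * (ε n t ω ^ 2 * |D n t ω|) + |S n ω|) μ := hi1'.add hi2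
    rw [integral_add hi3 (integrable_const _), integral_add hi1' hi2,
      integral_const_mul, integral_finsetSum _ hi1]
    simp only [integral_const_mul, integral_const, probReal_univ, one_smul]
  have hYlim : Tendsto (fun n => ∫ ω, |Y n ω - I| ∂μ) atTop (nhds 0) := by
    have hT3' : Tendsto (fun n => |a n - I|) atTop (nhds 0) := by
      simpa using (hT3.sub_const I).abs
    have := (hT1.add hT2).add hT3'
    rw [add_zero, add_zero] at this
    exact squeeze_zero (fun n => integral_nonneg fun ω => abs_nonneg _) hYle this
  set ρ : ℕ → ℝ := fun n => (n : ℝ) / ((n : ℝ) - h) with hρ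
  have hρlim : Tendsto ρ atTop (nhds 1) := by
    have := tendsto_natCast_div_add_atTop (𝕜 := ℝ) (-(h : ℝ))
    simpa only [hρ, sub_eq_add_neg] using this
  have hγ : ∀ᶠ n : ℕ in atTop, ∀ ω, gammaAr2 v ε K b n h ω = ρ n * Y n ω := by
    filter_upwards [eventually_gt_atTop 0] with n hn ω
    have hn' : (n : ℝ) ≠ 0 := by exact_mod_cast hn.ne'
    have hif : ∀ t, (if phat v ε K b n t ω = 0 then 0
        else phat2 v ε K b n h t ω / phat v ε K b n t ω)
        = phat2 v ε K b n h t ω / phat v ε K b n t ω := fun t => by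
      split_ifs with h0
      · rw [h0, div_zero]
      · rfl
    simp only [gammaAr2, hif, hρ, hY]
    field_simp
  refine tendstoInMeasure_of_tendsto_integral_abs μ ?_ ?_
  · filter_upwards [hγ] with n hn
    exact ((hYi n).const_mul (ρ n)).congr (Eventually.of_forall fun ω => (hn ω).symm)
  · have hlim : Tendsto (fun n => |ρ n| * ∫ ω, |Y n ω - I| ∂μ + |ρ n - 1| * |I|) atTop
        (nhds 0) := by
      simpa using (hρlim.abs.mul hYlim).add ((hρlim.sub_const 1).abs.mul_const |I|)
    refine squeeze_zero' (Eventually.of_forall fun n => integral_nonneg fun ω => abs_nonneg _)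
      ?_ hlim
    filter_upwards [hγ] with n hn
    have hi : Integrable (fun ω => |Y n ω - I|) μ := ((hYi n).sub (integrable_const I)).abs
    have hpt : ∀ ω, |gammaAr2 v ε K b n h ω - I| ≤ |ρ n| * |Y n ω - I| + |ρ n - 1| * |I| := by
      intro ω
      rw [hn ω, ← abs_mul, ← abs_mul]
      refine le_trans (le_of_eq ?_) (abs_add_le _ _)
      congr 1
      ring
    refine (integral_mono_of_nonneg (Eventually.of_forall fun ω => abs_nonneg _)
      ((hi.const_mul |ρ n|).add (integrable_const _)) (Eventually.of_forall hpt)).trans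
      (le_of_eq ?_)
    simp only [Pi.add_apply]
    rw [integral_add (hi.const_mul |ρ n|) (integrable_const _), integral_const_mul]
    simp only [integral_const, probReal_univ, one_smul]

end ZeroReturnsNS
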